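/- Let K be a function field over F_q, v a normalised discrete valuation of K with completion K_v, and Γ a finite-index subgroup of PGL₂(R_v) where R_v is the affine function ring of v. For every quadratic irrational α ∈ K_v over K, there exists m_α ∈ N such that for every integer m ≥ m_α, the value q_v^{−m} belongs to the quadratic Lagrange spectrum Sp(α, Γ); that is, Sp(α, Γ) contains a Hall ray. -/

import Mathlib

open Filter

/-- The projective (homography) action of a matrix `g ∈ GL₂(K)` on the completion `L` of `K`
(via the embedding `ι : K →+* L`): `g·x = (a x + b)/(c x + d)`. -/
noncomputable def homog {K L : Type*} [Field K] [Field L] (ι : K →+* L)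
    (g : GL (Fin 2) K) (x : L) : L :=
  (ι ((g : Matrix (Fin 2) (Fin 2) K) 0 0) * x + ι ((g : Matrix (Fin 2) (Fin 2) K) 0 1)) /
    (ι ((g : Matrix (Fin 2) (Fin 2) K) 1 0) * x + ι ((g : Matrix (Fin 2) (Fin 2) K) 1 1))

/-- The set of pairs `(β, β^σ)` with `β ∈ Θ_{α,Γ} = Γ·{α, α^σ}` and `β^σ` the corresponding
Galois conjugate, for the projective action of `Γ ≤ GL₂(K)` on the completion. -/
noncomputable def thetaPairsG {K L : Type*} [Field K] [Field L] (ι : K →+* L)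
    (Γ : Subgroup (GL (Fin 2) K)) (α ασ : L) : Set (L × L) :=
  {pr | ∃ g ∈ Γ, pr = (homog ι g α, homog ι g ασ) ∨ pr = (homog ι g ασ, homog ι g α)}

/-- The approximation constant
`c_{α,Γ}(x) = liminf_{β ∈ Θ_{α,Γ}, |β−β^σ|_v → 0} |x−β|_v/|β−β^σ|_v`. -/
noncomputable def capproxG {L : Type*} [Field L] (A : L → ℝ) (Θp : Set (L × L)) (x : L) : ℝ :=
  Filter.liminf (fun pr : L × L => A (x - pr.1) / A (pr.1 - pr.2))
    (Filter.principal Θp ⊓ Filter.comap (fun pr : L × L => A (pr.1 - pr.2)) (nhds 0))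

/-- The quadratic Lagrange spectrum `Sp(α, Γ) = {c_{α,Γ}(x) : x ∈ K_v − (K ∪ Θ_{α,Γ})}`. -/
noncomputable def quadSpectrumG {K L : Type*} [Field K] [Field L] (ι : K →+* L)
    (A : L → ℝ) (Θp : Set (L × L)) : Set ℝ :=
  {c | ∃ x : L, (∀ y : K, ι y ≠ x) ∧ (∀ pr ∈ Θp, pr.1 ≠ x) ∧ c = capproxG A Θp x}

/-!
An orbit point `β` and its conjugate `β'` are badly approximable by the cusps `p / q`, uniformly
over the orbit, since the norm form of `α`, cleared of denominators, takes values in `R`, whose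
nonzero elements have norm at least one. As `R` is cocompact in `L`, Dirichlet's pigeonhole
provides, for every `t` of norm `M > 1`, a cusp `ρ = p / q` with `|α' - ρ| = M |α - ρ|` and
`|p - q α| |p - q α'|` bounded independently of `t`. Distinct conjugate pairs of the orbit repel
each other, so for large `M` the pair `(α, α')` is extremal seen from `ρ`: `|β' - ρ| ≤ M |β - ρ|`
for all pairs `(β, β')`.

The orbit is invariant under arbitrarily long translations and arbitrarily long parabolic elements
fixing `ρ`. The attracting fixed point `x` of a product of two such elements satisfies
`|β - β'| ≤ M |x - β|` for all pairs, with equality for the images of a translate of `(α, α')` under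
the powers of the product. These images shrink to zero, hence `c(x) = 1 / M`.
-/

section Ultrametric

variable {G : Type*} [SeminormedAddCommGroup G] [IsUltrametricDist G] {x y : G}

theorem norm_sub_le_max_norm (x y : G) : ‖x - y‖ ≤ max ‖x‖ ‖y‖ := by
  simpa [sub_eq_add_neg] using IsUltrametricDist.norm_add_le_max x (-y)

theorem norm_add_eq_right_of_norm_lt (h : ‖x‖ < ‖y‖) : ‖x + y‖ = ‖y‖ := by
  rw [IsUltrametricDist.norm_add_eq_max_of_norm_ne_norm h.ne, max_eq_right h.le]

theorem norm_sub_eq_right_of_norm_lt (h : ‖x‖ < ‖y‖) : ‖x - y‖ = ‖y‖ := by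
  rw [← norm_neg y] at h ⊢
  rw [sub_eq_add_neg, norm_add_eq_right_of_norm_lt h]

theorem norm_sub_eq_left_of_norm_lt (h : ‖y‖ < ‖x‖) : ‖x - y‖ = ‖x‖ := by
  rw [norm_sub_rev, norm_sub_eq_right_of_norm_lt h]

theorem norm_eq_of_norm_sub_lt (h : ‖x - y‖ < ‖y‖) : ‖x‖ = ‖y‖ := by
  simpa using norm_add_eq_right_of_norm_lt h

end Ultrametric

section Cocompact

variable {R L : Type*} [CommRing R] [NontriviallyNormedField L] {φ : R →+* L}

theorem exists_one_lt_norm_map [IsUltrametricDist L]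
    (hφ : ∀ r, r ≠ 0 → 1 ≤ ‖φ r‖)
    (hdense : DenseRange fun x : R × nonZeroDivisors R ↦ φ x.1 / φ x.2) :
    ∃ r, 1 < ‖φ r‖ := by
  obtain ⟨y, hy⟩ := NormedField.exists_one_lt_norm L
  obtain ⟨⟨p, q⟩, hpq⟩ := hdense.exists_dist_lt y (zero_lt_one.trans hy)
  have : Nontrivial R := φ.domain_nontrivial
  have hq : 1 ≤ ‖φ q‖ := hφ q (nonZeroDivisors.coe_ne_zero q)
  have hnorm : ‖φ p‖ / ‖φ q‖ = ‖y‖ := by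
    rw [← norm_div]
    exact norm_eq_of_norm_sub_lt (by rwa [norm_sub_rev, ← dist_eq_norm])
  refine ⟨p, ?_⟩
  rw [div_eq_iff (by positivity)] at hnorm
  nlinarith

theorem exists_common_denominator_of_isCompact (hφ : ∀ r, r ≠ 0 → 1 ≤ ‖φ r‖)
    (hdense : DenseRange fun x : R × nonZeroDivisors R ↦ φ x.1 / φ x.2)
    {S : Set L} (hS : IsCompact S) :
    ∃ d : R, φ d ≠ 0 ∧ ∀ z ∈ S, ∃ a, ‖z - φ a / φ d‖ < 1 := by
  classical
  have : Nontrivial R := φ.domain_nontrivial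
  have hne (q : nonZeroDivisors R) : φ q ≠ 0 :=
    norm_pos_iff.1 (zero_lt_one.trans_le (hφ q (nonZeroDivisors.coe_ne_zero q)))
  obtain ⟨t, ht⟩ := hS.elim_finite_subcover
    (fun x : R × nonZeroDivisors R ↦ Metric.ball (φ x.1 / φ x.2) 1)
    (fun _ ↦ Metric.isOpen_ball) fun z _ ↦ by
      obtain ⟨x, hx⟩ := hdense.exists_dist_lt z one_pos
      exact Set.mem_iUnion.2 ⟨x, hx⟩
  refine ⟨↑(∏ x ∈ t, x.2), hne _, fun z hz ↦ ?_⟩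
  obtain ⟨x, hx, hzx⟩ := Set.mem_iUnion₂.1 (ht hz)
  refine ⟨x.1 * ↑(∏ y ∈ t.erase x, y.2), ?_⟩
  rw [← Finset.mul_prod_erase t _ hx, Submonoid.coe_mul, map_mul, map_mul,
    mul_div_mul_right _ _ (hne _), ← dist_eq_norm]
  exact hzx

theorem exists_forall_exists_norm_sub_map_le [IsUltrametricDist L] [ProperSpace L]
    (hφ : ∀ r, r ≠ 0 → 1 ≤ ‖φ r‖)
    (hdense : DenseRange fun x : R × nonZeroDivisors R ↦ φ x.1 / φ x.2) :
    ∃ c, ∀ z, ∃ r, ‖z - φ r‖ ≤ c := by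
  obtain ⟨X, hX⟩ := exists_one_lt_norm_map hφ hdense
  obtain ⟨d, hd, hdX⟩ :=
    exists_common_denominator_of_isCompact hφ hdense (isCompact_closedBall (0 : L) ‖φ X‖)
  have hX0 : φ X ≠ 0 := norm_pos_iff.1 (zero_lt_one.trans hX)
  have descent (k : ℕ) : ∀ y, ‖y‖ ≤ ‖φ X‖ ^ k → ∃ r, ‖φ d * y - φ r‖ ≤ ‖φ d‖ := by
    induction k with
    | zero => exact fun y hy ↦ ⟨0, by
        simpa using mul_le_of_le_one_right (norm_nonneg _) (by simpa using hy)⟩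
    | succ k ih =>
      intro y hy
      have hXk : 0 < ‖φ X ^ k‖ := norm_pos_iff.2 (pow_ne_zero k hX0)
      obtain ⟨a, ha⟩ := hdX (y / φ X ^ k) (by
        rw [mem_closedBall_zero_iff, norm_div, div_le_iff₀ hXk, norm_pow, ← pow_succ']
        exact hy)
      obtain ⟨r, hr⟩ := ih (y - φ X ^ k * (φ a / φ d)) (by
        rw [show y - φ X ^ k * (φ a / φ d) = φ X ^ k * (y / φ X ^ k - φ a / φ d) by field_simp,
          norm_mul, norm_pow]
        exact mul_le_of_le_one_right (by positivity) ha.le)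
      refine ⟨r + X ^ k * a, hr.trans_eq' (congrArg norm ?_)⟩
      rw [map_add, map_mul, map_pow]
      field_simp
      ring
  refine ⟨‖φ d‖, fun z ↦ ?_⟩
  obtain ⟨k, hk⟩ := pow_unbounded_of_one_lt ‖z / φ d‖ hX
  simpa [mul_div_cancel₀ _ hd] using descent k (z / φ d) hk.le

end Cocompact

section Dirichlet

/-- The closed ball of radius `‖x‖` around `0`, as an additive subgroup. Indexing it by `x` instead
of the radius makes scaling by a unit an operation on the index. -/
def normBall {G : Type*} [SeminormedAddCommGroup G] [IsUltrametricDist G] (x : G) :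
    AddSubgroup G where
  carrier := {z | ‖z‖ ≤ ‖x‖}
  add_mem' hy hz := (IsUltrametricDist.norm_add_le_max _ _).trans (max_le hy hz)
  zero_mem' := by simp
  neg_mem' hy := by simpa using hy

variable {L : Type*}

theorem mem_normBall [SeminormedAddCommGroup L] [IsUltrametricDist L] {x z : L} :
    z ∈ normBall x ↔ ‖z‖ ≤ ‖x‖ :=
  Iff.rfl

theorem coe_normBall [SeminormedAddCommGroup L] [IsUltrametricDist L] (x : L) :
    (normBall x : Set L) = Metric.closedBall 0 ‖x‖ := by
  ext z
  exact mem_closedBall_zero_iff.symm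

theorem normBall_mono [SeminormedAddCommGroup L] [IsUltrametricDist L] {x y : L}
    (h : ‖x‖ ≤ ‖y‖) : normBall x ≤ normBall y :=
  fun _ hz ↦ hz.trans h

variable [NormedField L] [IsUltrametricDist L]

theorem map_mulLeft_normBall {u : L} (hu : u ≠ 0) (x : L) :
    (normBall x).map (AddMonoidHom.mulLeft u) = normBall (u * x) := by
  ext z
  refine ⟨?_, fun hz ↦ ⟨z / u, ?_, mul_div_cancel₀ z hu⟩⟩
  · rintro ⟨y, hy, rfl⟩
    simpa only [mem_normBall, AddMonoidHom.coe_mulLeft, norm_mul] using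
      mul_le_mul_of_nonneg_left hy (norm_nonneg u)
  · rw [mem_normBall, norm_mul] at hz
    exact (norm_div z u).trans_le ((div_le_iff₀' (norm_pos_iff.2 hu)).2 hz)

theorem relIndex_normBall_mul {u : L} (hu : u ≠ 0) (x y : L) :
    (normBall (u * x)).relIndex (normBall (u * y)) = (normBall x).relIndex (normBall y) := by
  rw [← map_mulLeft_normBall hu, ← map_mulLeft_normBall hu,
    AddSubgroup.relIndex_map_map_of_injective _ _ (mul_right_injective₀ hu)]

theorem relIndex_normBall_ne_zero [ProperSpace L] {x : L} (hx : x ≠ 0) (y : L) :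
    (normBall x).relIndex (normBall y) ≠ 0 := by
  have hcompact : CompactSpace (normBall y) := isCompact_iff_compactSpace.1 <| by
    simpa only [← coe_normBall] using isCompact_closedBall (0 : L) ‖y‖
  have hopen : IsOpen (normBall x : Set L) := by
    simpa only [← coe_normBall] using
      IsUltrametricDist.isOpen_closedBall (0 : L) (norm_ne_zero_iff.2 hx)
  have := AddSubgroup.quotient_finite_of_isOpen ((normBall x).addSubgroupOf (normBall y))
    (hopen.preimage continuous_subtype_val)
  exact AddSubgroup.index_ne_zero_of_finite

variable {Λ : AddSubgroup L} {l : L} (hl : ∀ z, ∃ r ∈ Λ, ‖z - r‖ ≤ ‖l‖)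

include hl in
theorem index_sup_normBall_ne_zero_and_le [ProperSpace L] {x : L} (hx : x ≠ 0) :
    (Λ ⊔ normBall x).index ≠ 0 ∧
      (Λ ⊔ normBall x).index ≤ (normBall x).relIndex (normBall l) := by
  have htop : (Λ ⊔ normBall x) ⊔ normBall l = ⊤ := by
    refine eq_top_iff.2 fun z _ ↦ ?_
    obtain ⟨r, hr, hzr⟩ := hl z
    rw [← add_sub_cancel r z]
    exact AddSubgroup.add_mem_sup (AddSubgroup.mem_sup_left hr) hzr
  rw [← AddSubgroup.relIndex_top_right, ← htop, sup_comm _ (normBall l),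
    AddSubgroup.relIndex_sup_right]
  have hne := relIndex_normBall_ne_zero hx l
  exact ⟨mt (AddSubgroup.relIndex_eq_zero_of_le_left le_sup_right) hne,
    AddSubgroup.relIndex_le_of_le_left le_sup_right hne⟩

include hl in
theorem relIndex_normBall_le_card {y : L} (hy : ‖l‖ ≤ ‖y‖) [Finite ↥(Λ ⊓ normBall y)] :
    (normBall l).relIndex (normBall y) ≤ Nat.card ↥(Λ ⊓ normBall y) := by
  have hsup : normBall y ≤ (Λ ⊓ normBall y) ⊔ normBall l := fun z hz ↦ by
    obtain ⟨r, hr, hzr⟩ := hl z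
    rw [← add_sub_cancel r z]
    refine AddSubgroup.add_mem_sup ⟨hr, ?_⟩ hzr
    simpa using (normBall y).sub_mem hz (normBall_mono hy hzr)
  have hcard := AddSubgroup.relIndex_dvd_card (normBall l) (Λ ⊓ normBall y)
  calc (normBall l).relIndex (normBall y)
      ≤ (normBall l).relIndex ((Λ ⊓ normBall y) ⊔ normBall l) := by
        refine AddSubgroup.relIndex_le_of_le_right hsup ?_
        rw [AddSubgroup.relIndex_sup_right]
        exact ne_zero_of_dvd_ne_zero Nat.card_pos.ne' hcard
    _ = (normBall l).relIndex (Λ ⊓ normBall y) := AddSubgroup.relIndex_sup_right _ _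
    _ ≤ Nat.card ↥(Λ ⊓ normBall y) := Nat.le_of_dvd Nat.card_pos hcard

theorem relIndex_normBall_lt [ProperSpace L] {x y z : L} (hx : x ≠ 0) (hxy : ‖x‖ ≤ ‖y‖)
    (hyz : ‖y‖ < ‖z‖) :
    (normBall x).relIndex (normBall y) < (normBall x).relIndex (normBall z) := by
  have hne : (normBall y).relIndex (normBall z) ≠ 1 := fun h ↦
    (AddSubgroup.relIndex_eq_one.1 h (mem_normBall.2 le_rfl)).not_gt hyz
  have h0 := relIndex_normBall_ne_zero hx z
  rw [← AddSubgroup.relIndex_mul_relIndex _ _ _ (normBall_mono hxy) (normBall_mono hyz.le)] at h0 ⊢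
  exact lt_mul_of_one_lt_right (Nat.pos_of_ne_zero (left_ne_zero_of_mul h0)) (by
    have := right_ne_zero_of_mul h0; omega)

include hl in
theorem exists_ne_zero_norm_sub_mul_le [ProperSpace L] {X ϖ : L} (hX : 1 ≤ ‖l * X‖)
    (hϖ : 1 < ‖ϖ‖) (α : L) :
    ∃ q ∈ Λ, q ≠ 0 ∧ ‖q‖ ≤ ‖ϖ * (l * X * l)‖ ∧ ∃ p ∈ Λ, ‖p - q * α‖ ≤ ‖X⁻¹‖ := by
  -- Dirichlet's pigeonhole: otherwise `q ↦ q * α` embeds the lattice points of a ball into the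
  -- quotient of `L` by `Λ + normBall X⁻¹`, which is too small.
  by_contra! hno
  have hlX : l * X ≠ 0 := norm_pos_iff.1 (zero_lt_one.trans_le hX)
  have hl0 : l ≠ 0 := left_ne_zero_of_mul hlX
  have hX0 : X ≠ 0 := right_ne_zero_of_mul hlX
  have hll : ‖l‖ ≤ ‖l * X * l‖ := by
    rw [norm_mul _ l]; exact le_mul_of_one_le_left (norm_nonneg _) hX
  have hlt : ‖l * X * l‖ < ‖ϖ * (l * X * l)‖ := by
    rw [norm_mul ϖ]; exact lt_mul_of_one_lt_left (norm_pos_iff.2 (mul_ne_zero hlX hl0)) hϖ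
  set T := ϖ * (l * X * l)
  set H := Λ ⊔ normBall X⁻¹
  let f : ↥(Λ ⊓ normBall T) →+ L ⧸ H :=
    (QuotientAddGroup.mk' H).comp ((AddMonoidHom.mulRight α).comp (AddSubgroup.subtype _))
  have hf : Function.Injective f := by
    refine (injective_iff_map_eq_zero f).2 fun ⟨q, hqΛ, hqT⟩ hq ↦ ?_
    obtain ⟨p, hp, e, he, hpe⟩ := AddSubgroup.mem_sup.1 ((QuotientAddGroup.eq_zero_iff _).1 hq)
    by_contra hq0
    refine (hno q hqΛ (fun h ↦ hq0 (Subtype.ext h)) hqT p hp).not_ge ?_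
    have : p - q * α = -e := by
      have : p + e = q * α := hpe
      rw [← this]; ring
    rwa [this, norm_neg]
  obtain ⟨hfinite, hindex⟩ := index_sup_normBall_ne_zero_and_le hl (inv_ne_zero hX0)
  have hrel := relIndex_normBall_mul hlX X⁻¹ l
  rw [mul_assoc l X X⁻¹, mul_inv_cancel₀ hX0, mul_one] at hrel
  have : Finite (L ⧸ H) := AddSubgroup.index_ne_zero_iff_finite.1 hfinite
  have := Finite.of_injective f hf
  exact lt_irrefl _ <| calc
    Nat.card ↥(Λ ⊓ normBall T) ≤ H.index := Nat.card_le_card_of_injective f hf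
    _ ≤ (normBall X⁻¹).relIndex (normBall l) := hindex
    _ = (normBall l).relIndex (normBall (l * X * l)) := hrel.symm
    _ < (normBall l).relIndex (normBall T) := relIndex_normBall_lt hl0 hll hlt
    _ ≤ Nat.card ↥(Λ ⊓ normBall T) := relIndex_normBall_le_card hl (hll.trans hlt.le)

end Dirichlet

/-- `b` and `b'` are simultaneously badly approximable by the cusps `p / q` with `p, q ∈ R`,
including `∞ = 1 / 0`: in homogeneous coordinates, `|b - b'| ≤ D |p - q b| |p - q b'|`. -/
def IsBadlyApprox {R L : Type*} [Ring R] [NormedField L] (φ : R →+* L) (D : ℝ) (b b' : L) : Prop :=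
  ∀ p q : R, p ≠ 0 ∨ q ≠ 0 → ‖b - b'‖ ≤ D * (‖φ p - φ q * b‖ * ‖φ p - φ q * b'‖)

theorem exists_mul_add_mul_eq {F : Type*} [Field F] {u₁ u₂ u₁' u₂' : F}
    (hdet : u₁ * u₂' - u₂ * u₁' ≠ 0) (y y' : F) :
    ∃ x₁ x₂, x₁ * u₁ + x₂ * u₂ = y ∧ x₁ * u₁' + x₂ * u₂' = y' :=
  ⟨(y * u₂' - y' * u₂) / (u₁ * u₂' - u₂ * u₁'), (u₁ * y' - u₁' * y) / (u₁ * u₂' - u₂ * u₁'),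
    by rw [div_mul_eq_mul_div, div_mul_eq_mul_div, ← add_div, div_eq_iff hdet]; ring,
    by rw [div_mul_eq_mul_div, div_mul_eq_mul_div, ← add_div, div_eq_iff hdet]; ring⟩

section Lattice

variable {R L : Type*} [CommRing R] [NormedField L] {φ : R →+* L} {D : ℝ} {α α' : L}

namespace IsBadlyApprox

theorem symm (h : IsBadlyApprox φ D α α') : IsBadlyApprox φ D α' α := fun p q hpq ↦ by
  rw [norm_sub_rev, mul_comm ‖_‖]
  exact h p q hpq

theorem norm_sub_le (h : IsBadlyApprox φ D α α') : ‖α - α'‖ ≤ D := by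
  have : Nontrivial R := φ.domain_nontrivial
  simpa using h 1 0 (Or.inl one_ne_zero)

theorem norm_sub_le_of_proportional (h : IsBadlyApprox φ D α α') {p₁ q₁ p₂ q₂ : R} (hq₁ : q₁ ≠ 0)
    (hq₂ : q₂ ≠ 0) (hprop : p₁ * q₂ = p₂ * q₁) :
    ‖α - α'‖ ≤ D * (‖φ p₂ - φ q₂ * α‖ * ‖φ p₁ - φ q₁ * α'‖) := by
  have hD : 0 ≤ D := (norm_nonneg _).trans h.norm_sub_le
  have hswap : ‖φ p₁ - φ q₁ * α‖ * ‖φ p₂ - φ q₂ * α'‖ =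
      ‖φ p₂ - φ q₂ * α‖ * ‖φ p₁ - φ q₁ * α'‖ := by
    have := congrArg φ hprop
    simp only [map_mul] at this
    rw [← norm_mul, ← norm_mul]
    exact congrArg norm (by linear_combination (α - α') * this)
  refine abs_le_of_sq_le_sq' ?_ (by positivity) |>.2
  calc ‖α - α'‖ ^ 2
      ≤ (D * (‖φ p₁ - φ q₁ * α‖ * ‖φ p₁ - φ q₁ * α'‖)) *
        (D * (‖φ p₂ - φ q₂ * α‖ * ‖φ p₂ - φ q₂ * α'‖)) := by
        rw [sq]
        exact mul_le_mul (h p₁ q₁ (Or.inr hq₁)) (h p₂ q₂ (Or.inr hq₂)) (norm_nonneg _)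
          (by positivity)
    _ = _ := by linear_combination D ^ 2 * (‖φ p₂ - φ q₂ * α‖ * ‖φ p₁ - φ q₁ * α'‖) * hswap

end IsBadlyApprox

variable [IsUltrametricDist L]

theorem exists_norm_sub_forms_le {c : ℝ} (hc : ∀ z, ∃ r, ‖z - φ r‖ ≤ c) (hne : α ≠ α')
    (hφ : Function.Injective φ) {p₁ q₁ p₂ q₂ : R} (hdet : p₁ * q₂ ≠ p₂ * q₁) (y y' : L) :
    ∃ p q : R,
      ‖y - (φ p - φ q * α)‖ ≤ c * max ‖φ p₁ - φ q₁ * α‖ ‖φ p₂ - φ q₂ * α‖ ∧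
      ‖y' - (φ p - φ q * α')‖ ≤ c * max ‖φ p₁ - φ q₁ * α'‖ ‖φ p₂ - φ q₂ * α'‖ := by
  have hdet' : φ p₁ * φ q₂ - φ p₂ * φ q₁ ≠ 0 := by
    rw [← map_mul, ← map_mul]
    exact sub_ne_zero.2 (hφ.ne hdet)
  have hsub : α - α' ≠ 0 := sub_ne_zero.2 hne
  obtain ⟨x₁, x₂, hy, hy'⟩ := exists_mul_add_mul_eq (u₁ := φ p₁ - φ q₁ * α)
    (u₂ := φ p₂ - φ q₂ * α) (u₁' := φ p₁ - φ q₁ * α') (u₂' := φ p₂ - φ q₂ * α')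
    (fun h ↦ mul_ne_zero hdet' hsub (by linear_combination h)) y y'
  obtain ⟨r₁, hr₁⟩ := hc x₁
  obtain ⟨r₂, hr₂⟩ := hc x₂
  have hround (v₁ v₂ : L) :
      ‖(x₁ - φ r₁) * v₁ + (x₂ - φ r₂) * v₂‖ ≤ c * max ‖v₁‖ ‖v₂‖ := by
    have hc0 : 0 ≤ c := (norm_nonneg _).trans hr₁
    refine (IsUltrametricDist.norm_add_le_max _ _).trans (max_le ?_ ?_) <;> rw [norm_mul]
    · exact mul_le_mul hr₁ (le_max_left _ _) (norm_nonneg _) hc0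
    · exact mul_le_mul hr₂ (le_max_right _ _) (norm_nonneg _) hc0
  refine ⟨r₁ * p₁ + r₂ * p₂, r₁ * q₁ + r₂ * q₂, ?_, ?_⟩
  · refine (hround _ _).trans_eq' (congrArg norm ?_)
    simp only [map_add, map_mul]
    linear_combination hy
  · refine (hround _ _).trans_eq' (congrArg norm ?_)
    simp only [map_add, map_mul]
    linear_combination hy'

end Lattice

section GoodCusps

variable {R L : Type*} [CommRing R] [NontriviallyNormedField L] [IsUltrametricDist L]
  [ProperSpace L] {φ : R →+* L} {D : ℝ} {α α' : L}

theorem exists_forall_exists_norm_form_le {c : ℝ} (hc : ∀ z, ∃ r, ‖z - φ r‖ ≤ c) (α α' : L) :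
    ∃ C, ∀ X : L, 1 ≤ ‖X‖ → ∃ p q : R, q ≠ 0 ∧ ‖φ p - φ q * α‖ ≤ ‖X‖⁻¹ ∧
      ‖φ p - φ q * α'‖ ≤ C * ‖X‖ := by
  obtain ⟨l, hl⟩ := NormedField.exists_lt_norm L (max c 1)
  obtain ⟨hcl, hl1⟩ := max_lt_iff.1 hl
  obtain ⟨ϖ, hϖ⟩ := NormedField.exists_one_lt_norm L
  refine ⟨max 1 (‖ϖ‖ * (‖l‖ * ‖l‖) * ‖α - α'‖), fun X hX ↦ ?_⟩
  have hround (z : L) : ∃ r ∈ φ.toAddMonoidHom.range, ‖z - r‖ ≤ ‖l‖ := by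
    obtain ⟨r, hr⟩ := hc z
    exact ⟨φ r, ⟨r, rfl⟩, hr.trans hcl.le⟩
  obtain ⟨_, ⟨q, rfl⟩, hq0, hq, _, ⟨p, rfl⟩, hp⟩ := exists_ne_zero_norm_sub_mul_le hround
    (by rw [norm_mul]; exact one_le_mul_of_one_le_of_one_le hl1.le hX) hϖ α
  refine ⟨p, q, fun h ↦ hq0 (by simp [h]), by simpa using hp, ?_⟩
  calc ‖φ p - φ q * α'‖ = ‖(φ p - φ q * α) + φ q * (α - α')‖ := congrArg norm (by ring)
    _ ≤ max ‖φ p - φ q * α‖ ‖φ q * (α - α')‖ := IsUltrametricDist.norm_add_le_max _ _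
    _ ≤ max (1 * ‖X‖) (‖ϖ‖ * (‖l‖ * ‖l‖) * ‖α - α'‖ * ‖X‖) := by
      refine max_le_max ?_ ?_
      · exact (hp.trans (norm_inv X).le).trans ((inv_le_one_of_one_le₀ hX).trans (by simpa))
      · rw [norm_mul]
        refine (mul_le_mul_of_nonneg_right hq (norm_nonneg _)).trans_eq ?_
        simp only [norm_mul]
        ring
    _ = _ := (max_mul_of_nonneg _ _ (norm_nonneg X)).symm

theorem IsBadlyApprox.exists_norm_sub_forms_le_of_one_le (hφ : Function.Injective φ) {c : ℝ}
    (hc : ∀ z, ∃ r, ‖z - φ r‖ ≤ c) (h : IsBadlyApprox φ D α α') (hne : α ≠ α') :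
    ∃ C, ∀ X : L, 1 ≤ ‖X‖ → ∀ y y' : L, ∃ p q : R,
      ‖y - (φ p - φ q * α)‖ ≤ C * ‖X‖⁻¹ ∧ ‖y' - (φ p - φ q * α')‖ ≤ C * ‖X‖ := by
  obtain ⟨C, hC⟩ := exists_forall_exists_norm_form_le hc α α'
  have hδ : 0 < ‖α - α'‖ := norm_pos_iff.2 (sub_ne_zero.2 hne)
  obtain ⟨k, hk⟩ := NormedField.exists_lt_norm L (max 1 (D * C / ‖α - α'‖))
  obtain ⟨hk1, hkC⟩ := max_lt_iff.1 hk
  have hc0 : 0 ≤ c := (norm_nonneg _).trans (hc 0).choose_spec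
  have hD : 0 ≤ D := (norm_nonneg _).trans h.norm_sub_le
  refine ⟨c * max 1 (C * ‖k‖), fun X hX y y' ↦ ?_⟩
  have hX0 : 0 < ‖X‖ := zero_lt_one.trans_le hX
  obtain ⟨p₁, q₁, hq₁, hu₁, hu₁'⟩ := hC X hX
  obtain ⟨p₂, q₂, hq₂, hu₂, hu₂'⟩ := hC (k * X)
    (by rw [norm_mul]; exact one_le_mul_of_one_le_of_one_le hk1.le hX)
  rw [norm_mul] at hu₂ hu₂'
  have hdet : p₁ * q₂ ≠ p₂ * q₁ := fun hprop ↦ by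
    refine hkC.not_ge ((le_div_iff₀' hδ).2 ?_)
    calc ‖α - α'‖ * ‖k‖
        ≤ D * (‖φ p₂ - φ q₂ * α‖ * ‖φ p₁ - φ q₁ * α'‖) * ‖k‖ := by
          gcongr
          exact h.norm_sub_le_of_proportional hq₁ hq₂ hprop
      _ ≤ D * ((‖k‖ * ‖X‖)⁻¹ * (C * ‖X‖)) * ‖k‖ := by gcongr
      _ = D * C := by field_simp
  have hC0 : 0 ≤ C := nonneg_of_mul_nonneg_left ((norm_nonneg _).trans hu₁') hX0
  obtain ⟨p, q, hp, hp'⟩ := exists_norm_sub_forms_le hc hne hφ hdet y y'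
  refine ⟨p, q, hp.trans ?_, hp'.trans ?_⟩ <;> rw [mul_assoc c]
  · refine mul_le_mul_of_nonneg_left ((max_le hu₁ (hu₂.trans ?_)).trans ?_) hc0
    · exact inv_anti₀ hX0 (le_mul_of_one_le_left hX0.le hk1.le)
    · exact le_mul_of_one_le_left (inv_nonneg.2 hX0.le) (le_max_left _ _)
  · refine mul_le_mul_of_nonneg_left (max_le (hu₁'.trans ?_) (hu₂'.trans ?_)) hc0
    · gcongr
      exact le_max_of_le_right (le_mul_of_one_le_right hC0 hk1.le)
    · rw [← mul_assoc]
      gcongr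
      exact le_max_right _ _

theorem IsBadlyApprox.exists_cusp_norm_form_eq (hφ : Function.Injective φ) {c : ℝ}
    (hc : ∀ z, ∃ r, ‖z - φ r‖ ≤ c) (h : IsBadlyApprox φ D α α') (hne : α ≠ α') :
    ∃ C, ∀ t : L, 1 ≤ ‖t‖ → ∃ p q : R, φ p - φ q * α ≠ 0 ∧
      ‖φ p - φ q * α'‖ = ‖t‖ * ‖φ p - φ q * α‖ ∧
      ‖φ p - φ q * α‖ * ‖φ p - φ q * α'‖ ≤ C := by
  obtain ⟨C, hC⟩ := h.exists_norm_sub_forms_le_of_one_le hφ hc hne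
  obtain ⟨ϖ, hϖ⟩ := NormedField.exists_one_lt_norm L
  obtain ⟨J, hJ⟩ := NormedField.exists_lt_norm L (max 0 C)
  obtain ⟨hJ0, hJC⟩ := max_lt_iff.1 hJ
  refine ⟨‖J‖ ^ 2 * ‖ϖ‖ ^ 2, fun t ht ↦ ?_⟩
  obtain ⟨n, hn, hn'⟩ := exists_nat_pow_near ht (one_lt_pow₀ hϖ two_ne_zero)
  have hX : 1 ≤ ‖ϖ‖ ^ n := one_le_pow₀ hϖ.le
  have hXt : (‖ϖ‖ ^ n) ^ 2 ≤ ‖t‖ := by rwa [← pow_mul, mul_comm, pow_mul]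
  have htX : ‖t‖ < ‖ϖ‖ ^ 2 * (‖ϖ‖ ^ n) ^ 2 := by
    rwa [← pow_mul, mul_comm n, pow_mul, ← pow_succ']
  obtain ⟨p, q, hp, hp'⟩ := hC (ϖ ^ n) (by rwa [norm_pow]) (J / ϖ ^ n) (t * (J / ϖ ^ n))
  rw [norm_pow] at hp hp'
  set X := ‖ϖ‖ ^ n
  have hX0 : 0 < X := zero_lt_one.trans_le hX
  have hu : ‖φ p - φ q * α‖ = ‖J‖ / X := by
    rw [norm_eq_of_norm_sub_lt (y := J / ϖ ^ n), norm_div, norm_pow]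
    rw [norm_sub_rev, norm_div, norm_pow]
    exact hp.trans_lt (by rw [← div_eq_mul_inv]; gcongr)
  have hu' : ‖φ p - φ q * α'‖ = ‖t‖ * (‖J‖ / X) := by
    rw [norm_eq_of_norm_sub_lt (y := t * (J / ϖ ^ n)), norm_mul, norm_div, norm_pow]
    rw [norm_sub_rev, norm_mul, norm_div, norm_pow]
    calc _ ≤ C * X := hp'
      _ < ‖J‖ * X := by gcongr
      _ = X ^ 2 * (‖J‖ / X) := by field_simp
      _ ≤ ‖t‖ * (‖J‖ / X) := by gcongr
  refine ⟨p, q, norm_pos_iff.1 (hu ▸ div_pos hJ0 hX0), by rw [hu', hu], ?_⟩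
  rw [hu, hu']
  calc ‖J‖ / X * (‖t‖ * (‖J‖ / X)) ≤ ‖J‖ / X * (‖ϖ‖ ^ 2 * X ^ 2 * (‖J‖ / X)) := by gcongr
    _ = ‖J‖ ^ 2 * ‖ϖ‖ ^ 2 := by field_simp

end GoodCusps

section HyperbolicMap

/-- The homography `z ↦ t + 1 / (z⁻¹ + s)`, product of a parabolic element fixing `0` and of one
fixing `∞`; for `|t| |s| > 1` it is hyperbolic, and its attracting fixed point lies on the sphere
`|z| = |t|`. -/
def hyperbolicMap {F : Type*} [Field F] (t s z : F) : F :=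
  t + (z⁻¹ + s)⁻¹

variable {L : Type*} [NormedField L] [IsUltrametricDist L] {t s z w : L}

theorem norm_inv_add_of_norm_eq (hts : 1 < ‖t‖ * ‖s‖) (hz : ‖z‖ = ‖t‖) : ‖z⁻¹ + s‖ = ‖s‖ := by
  refine norm_add_eq_right_of_norm_lt ?_
  rw [norm_inv, hz]
  exact (inv_lt_iff_one_lt_mul₀' (pos_of_mul_pos_left (one_pos.trans hts) (norm_nonneg s))).2 hts

theorem norm_hyperbolicMap (hts : 1 < ‖t‖ * ‖s‖) (hz : ‖z‖ = ‖t‖) :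
    ‖hyperbolicMap t s z‖ = ‖t‖ := by
  rw [hyperbolicMap, add_comm]
  refine norm_add_eq_right_of_norm_lt ?_
  rw [norm_inv, norm_inv_add_of_norm_eq hts hz]
  exact (inv_lt_iff_one_lt_mul₀ (pos_of_mul_pos_right (one_pos.trans hts) (norm_nonneg t))).2 hts

theorem norm_hyperbolicMap_sub (hts : 1 < ‖t‖ * ‖s‖) (hz : ‖z‖ = ‖t‖) (hw : ‖w‖ = ‖t‖) :
    ‖hyperbolicMap t s z - hyperbolicMap t s w‖ = (‖t‖ * ‖s‖)⁻¹ ^ 2 * ‖z - w‖ := by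
  have ht : 0 < ‖t‖ := pos_of_mul_pos_left (one_pos.trans hts) (norm_nonneg s)
  have hs : 0 < ‖s‖ := pos_of_mul_pos_right (one_pos.trans hts) (norm_nonneg t)
  have hne {u : L} (hu : ‖u‖ = ‖t‖) : u ≠ 0 ∧ u⁻¹ + s ≠ 0 :=
    ⟨norm_pos_iff.1 (hu ▸ ht), norm_pos_iff.1 (norm_inv_add_of_norm_eq hts hu ▸ hs)⟩
  rw [hyperbolicMap, hyperbolicMap, add_sub_add_left_eq_sub, ← dist_eq_norm,
    dist_inv_inv₀ (hne hz).2 (hne hw).2, dist_add_right, dist_inv_inv₀ (hne hz).1 (hne hw).1,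
    norm_inv_add_of_norm_eq hts hz, norm_inv_add_of_norm_eq hts hw, hz, hw, dist_eq_norm]
  field_simp

theorem exists_norm_eq_hyperbolicMap_eq [CompleteSpace L] (hts : 1 < ‖t‖ * ‖s‖) :
    ∃ x, ‖x‖ = ‖t‖ ∧ hyperbolicMap t s x = x := by
  have hmaps : Set.MapsTo (hyperbolicMap t s) (Metric.sphere 0 ‖t‖) (Metric.sphere 0 ‖t‖) := by
    intro z hz
    rw [mem_sphere_zero_iff_norm] at hz ⊢
    exact norm_hyperbolicMap hts hz
  have hcontr : ContractingWith ((‖t‖₊ * ‖s‖₊)⁻¹ ^ 2) (hmaps.restrict _ _ _) := by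
    refine ⟨pow_lt_one₀ zero_le (inv_lt_one_of_one_lt₀ (by exact_mod_cast hts)) two_ne_zero,
      LipschitzWith.of_dist_le_mul fun z w ↦ ?_⟩
    rw [Subtype.dist_eq, Subtype.dist_eq, dist_eq_norm, dist_eq_norm]
    exact_mod_cast (norm_hyperbolicMap_sub hts (mem_sphere_zero_iff_norm.1 z.2)
      (mem_sphere_zero_iff_norm.1 w.2)).le
  obtain ⟨x, hx, hfix, -⟩ := hcontr.exists_fixedPoint' Metric.isClosed_sphere.isComplete hmaps
    (mem_sphere_zero_iff_norm.2 rfl) (edist_ne_top t _)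
  exact ⟨x, mem_sphere_zero_iff_norm.1 hx, hfix⟩

end HyperbolicMap

section PairDynamics

open scoped Pointwise

/-- `t` is a period of a set of pairs for the diagonal translation action. -/
def IsPeriod {G : Type*} [Add G] (P : Set (G × G)) (t : G) : Prop :=
  ∀ b b', (b + t, b' + t) ∈ P ↔ (b, b') ∈ P

/-- A symmetric set of pairs with gaps at most `C` as seen from both `0` and `∞`, and whose members
have distances to `0` in ratio at most `M`. -/
structure IsCuspBounded {L : Type*} [NormedField L] (C M : ℝ) (P : Set (L × L)) : Prop where
  swap_mem : ∀ {b b'}, (b, b') ∈ P → (b', b) ∈ P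
  fst_ne_zero : ∀ {b b'}, (b, b') ∈ P → b ≠ 0
  norm_sub_le : ∀ {b b'}, (b, b') ∈ P → ‖b - b'‖ ≤ C
  norm_inv_sub_inv_le : ∀ {b b'}, (b, b') ∈ P → ‖b⁻¹ - b'⁻¹‖ ≤ C
  norm_snd_le : ∀ {b b'}, (b, b') ∈ P → ‖b'‖ ≤ M * ‖b‖

variable {L : Type*} [NormedField L] {C M : ℝ} {P : Set (L × L)} {t s x y b b' : L}

theorem IsPeriod.hyperbolicMap_mem (hPt : IsPeriod P t) (hPs : IsPeriod P⁻¹ s)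
    (h : (b, b') ∈ P) : (hyperbolicMap t s b, hyperbolicMap t s b') ∈ P := by
  have hinv : (b⁻¹, b'⁻¹) ∈ P⁻¹ := by simpa [Set.mem_inv] using h
  have := (hPt _ _).2 (Set.mem_inv.1 ((hPs _ _).2 hinv))
  rwa [add_comm _ t, add_comm _ t] at this

namespace IsCuspBounded

theorem snd_ne_zero (hP : IsCuspBounded C M P) (h : (b, b') ∈ P) : b' ≠ 0 :=
  hP.fst_ne_zero (hP.swap_mem h)

theorem inv (hP : IsCuspBounded C M P) : IsCuspBounded C M P⁻¹ where
  swap_mem h := hP.swap_mem h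
  fst_ne_zero h := by simpa using hP.fst_ne_zero h
  norm_sub_le h := by simpa using hP.norm_inv_sub_inv_le h
  norm_inv_sub_inv_le h := hP.norm_sub_le h
  norm_snd_le {b b'} h := by
    have hb : 0 < ‖b‖ := norm_pos_iff.2 (by simpa using hP.fst_ne_zero h)
    have hb' : 0 < ‖b'‖ := norm_pos_iff.2 (by simpa using hP.snd_ne_zero h)
    have hle : ‖b‖⁻¹ ≤ M * ‖b'‖⁻¹ := by simpa using hP.norm_snd_le (hP.swap_mem h)
    rwa [← div_eq_mul_inv, le_div_iff₀ hb', inv_mul_le_iff₀ hb, mul_comm] at hle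

theorem one_le (hP : IsCuspBounded C M P) (h : (b, b') ∈ P) : 1 ≤ M := by
  by_contra! hM
  have hlt := mul_lt_of_lt_one_left (norm_pos_iff.2 (hP.fst_ne_zero h)) hM
  have hlt' := mul_lt_of_lt_one_left (norm_pos_iff.2 (hP.snd_ne_zero h)) hM
  linarith [hP.norm_snd_le h, hP.norm_snd_le (hP.swap_mem h)]

variable [IsUltrametricDist L]

theorem norm_eq_norm_of_norm_le (hP : IsCuspBounded C M P) (h : (b, b') ∈ P) (hy : C < ‖y⁻¹‖)
    (hle : ‖b‖ ≤ ‖y‖) : ‖b‖ = ‖b'‖ := by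
  have hb : 0 < ‖b‖ := norm_pos_iff.2 (hP.fst_ne_zero h)
  have hinv : ‖b'⁻¹‖ = ‖b⁻¹‖ := norm_eq_of_norm_sub_lt <|
    calc ‖b'⁻¹ - b⁻¹‖ ≤ C := hP.norm_inv_sub_inv_le (hP.swap_mem h)
      _ < ‖y‖⁻¹ := by rwa [← norm_inv]
      _ ≤ ‖b⁻¹‖ := by rw [norm_inv]; gcongr
  rw [norm_inv, norm_inv, inv_inj] at hinv
  exact hinv.symm

theorem norm_eq_of_mul_norm_sub_lt (hP : IsCuspBounded C M P) (h : (b, b') ∈ P)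
    (hy : C < ‖y⁻¹‖) (hlt : M * ‖y - b‖ < ‖y - b'‖) : ‖b‖ = ‖y‖ ∧ ‖b'‖ = ‖y‖ := by
  have hbb' : ‖b‖ = ‖b'‖ ∧ ‖b‖ ≤ ‖y‖ := by
    rcases le_or_gt ‖b‖ ‖y‖ with hb | hb
    · exact ⟨hP.norm_eq_norm_of_norm_le h hy hb, hb⟩
    rcases le_or_gt ‖b'‖ ‖y‖ with hb' | hb'
    · have heq := hP.norm_eq_norm_of_norm_le (hP.swap_mem h) hy hb'
      exact ⟨heq.symm, heq ▸ hb'⟩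
    · rw [norm_sub_eq_right_of_norm_lt hb, norm_sub_eq_right_of_norm_lt hb'] at hlt
      exact absurd (hP.norm_snd_le h) hlt.not_ge
  obtain ⟨heq, hle⟩ := hbb'
  rcases hle.lt_or_eq with hb | hb
  · rw [norm_sub_eq_left_of_norm_lt hb, norm_sub_eq_left_of_norm_lt (heq ▸ hb)] at hlt
    exact absurd hlt (le_mul_of_one_le_left (norm_nonneg y) (hP.one_le h)).not_gt
  · exact ⟨hb, heq ▸ hb⟩

theorem mul_norm_inv_sub_inv_lt (hP : IsCuspBounded C M P) (h : (b, b') ∈ P)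
    (hy : C < ‖y⁻¹‖) (hlt : M * ‖y - b‖ < ‖y - b'‖) :
    M * ‖y⁻¹ - b⁻¹‖ < ‖y⁻¹ - b'⁻¹‖ := by
  obtain ⟨hb, hb'⟩ := hP.norm_eq_of_mul_norm_sub_lt h hy hlt
  have hy0 : 0 < ‖y‖ := hb ▸ norm_pos_iff.2 (hP.fst_ne_zero h)
  rw [← dist_eq_norm, ← dist_eq_norm, dist_inv_inv₀ (norm_pos_iff.1 hy0) (hP.fst_ne_zero h),
    dist_inv_inv₀ (norm_pos_iff.1 hy0) (hP.snd_ne_zero h), hb, hb', ← mul_div_assoc,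
    dist_eq_norm, dist_eq_norm]
  gcongr

/-- A pair violating the bound `|x - b'| ≤ M |x - b|` at the fixed point `x`
lies on the sphere where the dynamics is expanding, so it comes from another such pair. -/
theorem exists_hyperbolicMap_eq_of_mul_norm_sub_lt (hP : IsCuspBounded C M P) (ht : C < ‖t‖)
    (hs : C < ‖s‖) (hts : 1 < ‖t‖ * ‖s‖) (hPt : IsPeriod P t) (hPs : IsPeriod P⁻¹ s)
    (hx : ‖x‖ = ‖t‖) (hfix : hyperbolicMap t s x = x) (h : (b, b') ∈ P)
    (hlt : M * ‖x - b‖ < ‖x - b'‖) :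
    ∃ c c', (c, c') ∈ P ∧ ‖c‖ = ‖t‖ ∧ ‖c'‖ = ‖t‖ ∧ hyperbolicMap t s c = b ∧
      hyperbolicMap t s c' = b' ∧ M * ‖x - c‖ < ‖x - c'‖ := by
  have hy : (x - t)⁻¹ = x⁻¹ + s := by
    conv_lhs => rw [← hfix, hyperbolicMap, add_sub_cancel_left, inv_inv]
  have hbt : (b - t, b' - t) ∈ P := (hPt _ _).1 (by simpa using h)
  have hyC : C < ‖(x - t)⁻¹‖ := by rwa [hy, norm_inv_add_of_norm_eq hts hx]
  have hlty : M * ‖(x - t) - (b - t)‖ < ‖(x - t) - (b' - t)‖ := by simpa using hlt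
  have hlt' := hP.mul_norm_inv_sub_inv_lt hbt hyC hlty
  have hc : ((b - t)⁻¹ - s, (b' - t)⁻¹ - s) ∈ P⁻¹ := (hPs _ _).1 (by simpa [Set.mem_inv] using hbt)
  have hxC : C < ‖x⁻¹⁻¹‖ := by rwa [inv_inv, hx]
  have hltx : M * ‖x⁻¹ - ((b - t)⁻¹ - s)‖ < ‖x⁻¹ - ((b' - t)⁻¹ - s)‖ := by
    rwa [← sub_add, ← sub_add, sub_add_eq_add_sub, sub_add_eq_add_sub, ← hy]
  obtain ⟨hc₁, hc₂⟩ := hP.inv.norm_eq_of_mul_norm_sub_lt hc hxC hltx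
  have hltx' := hP.inv.mul_norm_inv_sub_inv_lt hc hxC hltx
  rw [inv_inv] at hltx'
  refine ⟨((b - t)⁻¹ - s)⁻¹, ((b' - t)⁻¹ - s)⁻¹, Set.mem_inv.1 hc, ?_, ?_, ?_, ?_, hltx'⟩
  · rw [norm_inv, hc₁, norm_inv, inv_inv, hx]
  · rw [norm_inv, hc₂, norm_inv, inv_inv, hx]
  · simp [hyperbolicMap]
  · simp [hyperbolicMap]

theorem norm_sub_snd_le (hP : IsCuspBounded C M P) (ht : C < ‖t‖)
    (hs : C < ‖s‖) (hts : 1 < ‖t‖ * ‖s‖) (hPt : IsPeriod P t) (hPs : IsPeriod P⁻¹ s)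
    (hx : ‖x‖ = ‖t‖) (hfix : hyperbolicMap t s x = x) (h : (b, b') ∈ P) :
    ‖x - b'‖ ≤ M * ‖x - b‖ := by
  by_contra! hlt
  have hgap (n : ℕ) : ∀ {b b'}, (b, b') ∈ P → M * ‖x - b‖ < ‖x - b'‖ →
      ‖b - b'‖ ≤ ((‖t‖ * ‖s‖)⁻¹ ^ 2) ^ n * C := by
    induction n with
    | zero => exact fun hb _ ↦ by simpa using hP.norm_sub_le hb
    | succ n ih =>
      intro b b' hb hlt
      obtain ⟨c, c', hcP, hc, hc', rfl, rfl, hltc⟩ :=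
        hP.exists_hyperbolicMap_eq_of_mul_norm_sub_lt ht hs hts hPt hPs hx hfix hb hlt
      rw [norm_hyperbolicMap_sub hts hc hc', pow_succ' _ n, mul_assoc]
      exact mul_le_mul_of_nonneg_left (ih hcP hltc) (by positivity)
  have hlim : Tendsto (fun n : ℕ ↦ ((‖t‖ * ‖s‖)⁻¹ ^ 2) ^ n * C) atTop (nhds 0) := by
    simpa only [zero_mul] using (tendsto_pow_atTop_nhds_zero_of_lt_one (sq_nonneg _)
      (pow_lt_one₀ (by positivity) (inv_lt_one_of_one_lt₀ hts) two_ne_zero)).mul_const C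
  have hbb' : b = b' :=
    sub_eq_zero.1 (norm_le_zero_iff.1 (ge_of_tendsto' hlim fun n ↦ hgap n h hlt))
  rw [hbb'] at hlt
  exact absurd hlt (le_mul_of_one_le_left (norm_nonneg _) (hP.one_le h)).not_gt

theorem norm_sub_le_mul (hP : IsCuspBounded C M P) (ht : C < ‖t‖)
    (hs : C < ‖s‖) (hts : 1 < ‖t‖ * ‖s‖) (hPt : IsPeriod P t) (hPs : IsPeriod P⁻¹ s)
    (hx : ‖x‖ = ‖t‖) (hfix : hyperbolicMap t s x = x) (h : (b, b') ∈ P) :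
    ‖b - b'‖ ≤ M * ‖x - b‖ :=
  calc ‖b - b'‖ = ‖(x - b') - (x - b)‖ := by rw [sub_sub_sub_cancel_left]
    _ ≤ max ‖x - b'‖ ‖x - b‖ := norm_sub_le_max_norm _ _
    _ ≤ M * ‖x - b‖ := max_le (hP.norm_sub_snd_le ht hs hts hPt hPs hx hfix h)
      (le_mul_of_one_le_left (norm_nonneg _) (hP.one_le h))

end IsCuspBounded

theorem exists_norm_sub_eq_pow_mul [IsUltrametricDist L] (hts : 1 < ‖t‖ * ‖s‖)
    (hPt : IsPeriod P t) (hPs : IsPeriod P⁻¹ s) (hx : ‖x‖ = ‖t‖)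
    (hfix : hyperbolicMap t s x = x) (h : (b, b') ∈ P) (hb : ‖b‖ = ‖t‖) (hb' : ‖b'‖ = ‖t‖)
    (heq : ‖b - b'‖ = M * ‖x - b‖) (n : ℕ) :
    ∃ c c', (c, c') ∈ P ∧ ‖c‖ = ‖t‖ ∧ ‖c'‖ = ‖t‖ ∧
      ‖c - c'‖ = ((‖t‖ * ‖s‖)⁻¹ ^ 2) ^ n * ‖b - b'‖ ∧ ‖c - c'‖ = M * ‖x - c‖ := by
  induction n with
  | zero => exact ⟨b, b', h, hb, hb', by simp, heq⟩
  | succ n ih =>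
    obtain ⟨c, c', hcP, hc, hc', hpow, hM⟩ := ih
    refine ⟨_, _, hPt.hyperbolicMap_mem hPs hcP, norm_hyperbolicMap hts hc,
      norm_hyperbolicMap hts hc', ?_, ?_⟩
    · rw [norm_hyperbolicMap_sub hts hc hc', hpow, pow_succ' _ n, mul_assoc]
    · conv_rhs => rw [← hfix]
      rw [norm_hyperbolicMap_sub hts hc hc', norm_hyperbolicMap_sub hts hx hc, hM, mul_left_comm]

theorem IsCuspBounded.exists_extremal_point [IsUltrametricDist L] [CompleteSpace L]
    (hP : IsCuspBounded C M P) (ht : C < ‖t‖) (hs : C < ‖s‖) (hPt : IsPeriod P t)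
    (hPs : IsPeriod P⁻¹ s) (hM : 1 < M) (h : (b, b') ∈ P) (heq : ‖b'‖ = M * ‖b‖)
    (hbt : ‖b'‖ < ‖t‖) (hbs : ‖s‖⁻¹ < ‖b‖) :
    ∃ x, (∀ {c c'}, (c, c') ∈ P → ‖c - c'‖ ≤ M * ‖x - c‖) ∧
      ∀ ε > 0, ∃ c c', (c, c') ∈ P ∧ 0 < ‖c - c'‖ ∧ ‖c - c'‖ < ε ∧
        ‖c - c'‖ = M * ‖x - c‖ := by
  have hb : 0 < ‖b‖ := norm_pos_iff.2 (hP.fst_ne_zero h)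
  have hbb' : ‖b‖ < ‖b'‖ := heq ▸ lt_mul_left hb hM
  have hs0 : 0 < ‖s‖ := ((norm_nonneg _).trans (hP.norm_sub_le h)).trans_lt hs
  have hts : 1 < ‖t‖ * ‖s‖ := (inv_lt_iff_one_lt_mul₀ hs0).1 (hbs.trans (hbb'.trans hbt))
  have ht0 : 0 < ‖t‖ := hb.trans (hbb'.trans hbt)
  obtain ⟨x, hx, hfix⟩ := exists_norm_eq_hyperbolicMap_eq hts
  refine ⟨x, hP.norm_sub_le_mul ht hs hts hPt hPs hx hfix, fun ε hε ↦ ?_⟩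
  have hgap : ‖(b + t) - (b' + t)‖ = ‖b'‖ := by
    rw [add_sub_add_right_eq_sub, norm_sub_eq_right_of_norm_lt hbb']
  have hxb : ‖x - (b + t)‖ = ‖b‖ := by
    have hxt : x - t = (x⁻¹ + s)⁻¹ := by
      conv_lhs => rw [← hfix, hyperbolicMap, add_sub_cancel_left]
    rw [add_comm, ← sub_sub, hxt, norm_sub_eq_right_of_norm_lt]
    rwa [norm_inv, norm_inv_add_of_norm_eq hts hx]
  obtain ⟨n, hn⟩ := exists_pow_lt_of_lt_one (div_pos hε (hb.trans hbb'))
    (pow_lt_one₀ (by positivity) (inv_lt_one_of_one_lt₀ hts) two_ne_zero)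
  obtain ⟨c, c', hcP, -, -, hpow, hcM⟩ := exists_norm_sub_eq_pow_mul hts hPt hPs hx hfix
    ((hPt _ _).2 h) (norm_add_eq_right_of_norm_lt (hbb'.trans hbt))
    (norm_add_eq_right_of_norm_lt hbt) (by rw [hgap, hxb, heq]) n
  rw [hgap] at hpow
  refine ⟨c, c', hcP, ?_, ?_, hcM⟩ <;> rw [hpow]
  · have := hb.trans hbb'
    positivity
  · exact (lt_div_iff₀ (hb.trans hbb')).1 hn

end PairDynamics

section Moebius

/-- The projective action of `GL₂(R)` on a field `L` over `R`, in the affine coordinate. -/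
noncomputable def moebius {R L : Type*} [CommRing R] [Field L] (φ : R →+* L) (g : GL (Fin 2) R)
    (z : L) : L :=
  (φ (g 0 0) * z + φ (g 0 1)) / (φ (g 1 0) * z + φ (g 1 1))

/-- `z ∈ L` is not a quotient of two elements of `R`, in a form which also records that `R` embeds
into `L`. -/
def IsIrrational {R L : Type*} [Ring R] [Ring L] (φ : R →+* L) (z : L) : Prop :=
  ∀ p q : R, p ≠ 0 ∨ q ≠ 0 → φ p - φ q * z ≠ 0

variable {R L : Type*} [CommRing R] [Field L] {φ : R →+* L} {z w : L}

theorem isUnit_det_fin_two (g : GL (Fin 2) R) : IsUnit (g 0 0 * g 1 1 - g 0 1 * g 1 0) := by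
  rw [← Matrix.det_fin_two]
  exact (Matrix.isUnit_iff_isUnit_det _).1 g.isUnit

theorem vecMul_adjugate_ne_zero (g : GL (Fin 2) R) {p q : R} (hpq : p ≠ 0 ∨ q ≠ 0) :
    p * g 1 1 - q * g 0 1 ≠ 0 ∨ q * g 0 0 - p * g 1 0 ≠ 0 := by
  by_contra! h
  obtain ⟨h₁, h₂⟩ := h
  have hp : (g 0 0 * g 1 1 - g 0 1 * g 1 0) * p = 0 := by
    linear_combination g 0 0 * h₁ + g 0 1 * h₂
  have hq : (g 0 0 * g 1 1 - g 0 1 * g 1 0) * q = 0 := by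
    linear_combination g 1 0 * h₁ + g 1 1 * h₂
  rw [(isUnit_det_fin_two g).mul_right_eq_zero] at hp hq
  exact hpq.elim (· hp) (· hq)

theorem IsIrrational.den_ne_zero (hz : IsIrrational φ z) (g : GL (Fin 2) R) :
    φ (g 1 0) * z + φ (g 1 1) ≠ 0 := by
  have : Nontrivial R := φ.domain_nontrivial
  have hpq := vecMul_adjugate_ne_zero g (.inl (one_ne_zero' R) : _ ∨ (0 : R) ≠ 0)
  simpa [add_comm] using hz _ _ hpq

theorem moebius_one (z : L) : moebius φ 1 z = z := by
  simp [moebius]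

theorem IsIrrational.moebius_mul (hz : IsIrrational φ z) (g h : GL (Fin 2) R) :
    moebius φ (g * h) z = moebius φ g (moebius φ h z) := by
  have hd := hz.den_ne_zero h
  simp only [moebius, Units.val_mul, Matrix.mul_apply, Fin.sum_univ_two, map_add, map_mul]
  rw [← mul_div_mul_right (_ * (_ / _) + _) _ hd]
  congr 1
  · rw [add_mul _ (φ (g 0 1)), mul_assoc, div_mul_cancel₀ _ hd]; ring
  · rw [add_mul _ (φ (g 1 1)), mul_assoc, div_mul_cancel₀ _ hd]; ring

theorem IsIrrational.sub_mul_moebius (hz : IsIrrational φ z) (g : GL (Fin 2) R) (p q : R) :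
    φ p - φ q * moebius φ g z =
      (φ (p * g 1 1 - q * g 0 1) - φ (q * g 0 0 - p * g 1 0) * z) /
        (φ (g 1 0) * z + φ (g 1 1)) := by
  rw [moebius, eq_div_iff (hz.den_ne_zero g), sub_mul, ← mul_div_assoc,
    div_mul_cancel₀ _ (hz.den_ne_zero g)]
  simp only [map_sub, map_mul]
  ring

theorem IsIrrational.moebius_sub_moebius (hz : IsIrrational φ z) (hw : IsIrrational φ w)
    (g : GL (Fin 2) R) :
    moebius φ g z - moebius φ g w = φ (g 0 0 * g 1 1 - g 0 1 * g 1 0) * (z - w) /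
      ((φ (g 1 0) * z + φ (g 1 1)) * (φ (g 1 0) * w + φ (g 1 1))) := by
  rw [moebius, moebius, div_sub_div _ _ (hz.den_ne_zero g) (hw.den_ne_zero g)]
  simp only [map_sub, map_mul]
  ring

end Moebius

section NormedMoebius

variable {R L : Type*} [CommRing R] [NormedField L] {φ : R →+* L} {z w : L} {D : ℝ}

theorem norm_map_eq_one_of_isUnit (hφ : ∀ r, r ≠ 0 → 1 ≤ ‖φ r‖) {u : R} (hu : IsUnit u) :
    ‖φ u‖ = 1 := by
  have : Nontrivial R := φ.domain_nontrivial
  obtain ⟨v, hv⟩ := hu.exists_right_inv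
  have hprod : ‖φ u‖ * ‖φ v‖ = 1 := by rw [← norm_mul, ← map_mul, hv, map_one, norm_one]
  refine le_antisymm ?_ (hφ u hu.ne_zero)
  exact hprod ▸ le_mul_of_one_le_right (norm_nonneg _) (hφ v (right_ne_zero_of_mul_eq_one hv))

theorem IsIrrational.norm_moebius_sub_moebius (hφ : ∀ r, r ≠ 0 → 1 ≤ ‖φ r‖)
    (hz : IsIrrational φ z) (hw : IsIrrational φ w) (g : GL (Fin 2) R) :
    ‖moebius φ g z - moebius φ g w‖ =
      ‖z - w‖ / (‖φ (g 1 0) * z + φ (g 1 1)‖ * ‖φ (g 1 0) * w + φ (g 1 1)‖) := by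
  rw [hz.moebius_sub_moebius hw, norm_div, norm_mul, norm_mul,
    norm_map_eq_one_of_isUnit hφ (isUnit_det_fin_two g), one_mul]

theorem IsBadlyApprox.moebius (hφ : ∀ r, r ≠ 0 → 1 ≤ ‖φ r‖) (h : IsBadlyApprox φ D z w)
    (hz : IsIrrational φ z) (hw : IsIrrational φ w) (g : GL (Fin 2) R) :
    IsBadlyApprox φ D (moebius φ g z) (moebius φ g w) := fun p q hpq ↦ by
  rw [hz.norm_moebius_sub_moebius hφ hw, hz.sub_mul_moebius, hw.sub_mul_moebius, norm_div, norm_div,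
    div_mul_div_comm, ← mul_div_assoc]
  gcongr
  exact h _ _ (vecMul_adjugate_ne_zero g hpq)

end NormedMoebius

section ConjugatePair

/-- `α` and `α'` are the two roots of the irreducible quadratic polynomial `a X² + b X + c`; the
relations between roots and coefficients are used instead of the polynomial itself. -/
structure IsConjugatePair {R L : Type*} [CommRing R] [Field L] (φ : R →+* L) (a b c : R)
    (α α' : L) : Prop where
  map_ne_zero : φ a ≠ 0
  mul_add : φ a * (α + α') = -φ b
  mul_mul : φ a * (α * α') = φ c
  ne : α ≠ α'
  isIrrational_fst : IsIrrational φ α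
  isIrrational_snd : IsIrrational φ α'

namespace IsConjugatePair

variable {R L : Type*} [CommRing R]

section Field

variable [Field L] {φ : R →+* L} {a b c : R} {α α' : L}

theorem mul_norm_form (h : IsConjugatePair φ a b c α α') (p q : R) :
    φ a * ((φ p - φ q * α) * (φ p - φ q * α')) = φ (a * p ^ 2 + b * (p * q) + c * q ^ 2) := by
  simp only [map_add, map_mul, map_pow]
  linear_combination -φ p * φ q * h.mul_add + φ q ^ 2 * h.mul_mul

theorem symm (h : IsConjugatePair φ a b c α α') : IsConjugatePair φ a b c α' α where
  map_ne_zero := h.map_ne_zero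
  mul_add := add_comm α' α ▸ h.mul_add
  mul_mul := mul_comm α' α ▸ h.mul_mul
  ne := h.ne.symm
  isIrrational_fst := h.isIrrational_snd
  isIrrational_snd := h.isIrrational_fst

theorem mul_moebius_sub_eq (h : IsConjugatePair φ a b c α α') {g : GL (Fin 2) R} {F G H : R}
    (hF : F = a * g 0 0 ^ 2 + b * (g 0 0 * g 1 0) + c * g 1 0 ^ 2)
    (hG : G = 2 * a * (g 0 0 * g 0 1) + b * (g 0 0 * g 1 1 + g 0 1 * g 1 0) +
      2 * c * (g 1 0 * g 1 1))
    (hH : H = a * g 0 1 ^ 2 + b * (g 0 1 * g 1 1) + c * g 1 1 ^ 2) :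
    φ a ^ 2 * ((φ (g 1 0) * α + φ (g 1 1)) ^ 2 *
      ((moebius φ g α - α) * (moebius φ g α - α'))) =
        φ (a * H - c * F) - φ (b * F - a * G) * α := by
  have hg : moebius φ g α * (φ (g 1 0) * α + φ (g 1 1)) = φ (g 0 0) * α + φ (g 0 1) :=
    div_mul_cancel₀ _ (h.isIrrational_fst.den_ne_zero g)
  set β := moebius φ g α
  set d := φ (g 1 0) * α + φ (g 1 1) with hd
  have hroot : φ a * α ^ 2 + φ b * α + φ c = 0 := by
    linear_combination α * h.mul_add - h.mul_mul
  calc φ a ^ 2 * (d ^ 2 * ((β - α) * (β - α')))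
      = φ a * (φ a * (β * d) ^ 2 + φ b * (β * d) * d + φ c * d ^ 2) := by
        linear_combination -φ a * d ^ 2 * β * h.mul_add + φ a * d ^ 2 * h.mul_mul
    _ = φ a * (φ F * α ^ 2 + φ G * α + φ H) := by
      rw [hg, hd, hF, hG, hH]
      simp only [map_add, map_mul, map_pow, map_ofNat]
      ring
    _ = φ (a * H - c * F) - φ (b * F - a * G) * α := by
      simp only [map_sub, map_mul]
      linear_combination φ F * hroot

/-- The value at `g α` of the minimal polynomial of `α` is, up to the denominators, an element
`x - y α` with `x, y ∈ R`. -/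
theorem exists_mul_moebius_sub_eq (h : IsConjugatePair φ a b c α α') (g : GL (Fin 2) R) :
    ∃ x y : R,
      φ a ^ 2 * ((φ (g 1 0) * α + φ (g 1 1)) ^ 2 *
        ((moebius φ g α - α) * (moebius φ g α - α'))) = φ x - φ y * α ∧
      φ a ^ 2 * ((φ (g 1 0) * α' + φ (g 1 1)) ^ 2 *
        ((moebius φ g α' - α') * (moebius φ g α' - α))) = φ x - φ y * α' :=
  ⟨_, _, h.mul_moebius_sub_eq rfl rfl rfl, h.symm.mul_moebius_sub_eq rfl rfl rfl⟩

theorem moebius_ne (h : IsConjugatePair φ a b c α α') (g : GL (Fin 2) R) :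
    moebius φ g α ≠ moebius φ g α' := by
  rw [← sub_ne_zero, h.isIrrational_fst.moebius_sub_moebius h.isIrrational_snd]
  exact div_ne_zero
    (mul_ne_zero ((isUnit_det_fin_two g).map φ).ne_zero (sub_ne_zero.2 h.ne))
    (mul_ne_zero (h.isIrrational_fst.den_ne_zero g) (h.isIrrational_snd.den_ne_zero g))

theorem moebius_eq_or_eq_swap_of_mul_eq_zero (h : IsConjugatePair φ a b c α α') {g : GL (Fin 2) R}
    (h₁ : (moebius φ g α - α) * (moebius φ g α - α') = 0)
    (h₂ : (moebius φ g α' - α') * (moebius φ g α' - α) = 0) :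
    (moebius φ g α = α ∧ moebius φ g α' = α') ∨ (moebius φ g α = α' ∧ moebius φ g α' = α) := by
  have hne := h.moebius_ne g
  simp only [mul_eq_zero, sub_eq_zero] at h₁ h₂
  grind

end Field

section Normed

variable [NormedField L] {φ : R →+* L} {a b c : R} {α α' : L} {D : ℝ}

theorem isBadlyApprox (hφ : ∀ r, r ≠ 0 → 1 ≤ ‖φ r‖) (h : IsConjugatePair φ a b c α α') :
    IsBadlyApprox φ (‖φ a‖ * ‖α - α'‖) α α' := fun p q hpq ↦ by
  have hform := h.mul_norm_form p q
  have hne : φ (a * p ^ 2 + b * (p * q) + c * q ^ 2) ≠ 0 := hform ▸ mul_ne_zero h.map_ne_zero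
    (mul_ne_zero (h.isIrrational_fst p q hpq) (h.isIrrational_snd p q hpq))
  have hone := hφ _ (ne_zero_of_map hne)
  rw [← hform, norm_mul, norm_mul] at hone
  exact (le_mul_of_one_le_right (norm_nonneg _) hone).trans_eq (by ring)

theorem moebius_eq_or_norm_sub_sq_le (hφ : ∀ r, r ≠ 0 → 1 ≤ ‖φ r‖)
    (h : IsConjugatePair φ a b c α α') (hD : IsBadlyApprox φ D α α') (g : GL (Fin 2) R) :
    (moebius φ g α = α ∧ moebius φ g α' = α') ∨ (moebius φ g α = α' ∧ moebius φ g α' = α) ∨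
      ‖moebius φ g α - moebius φ g α'‖ ^ 2 ≤ D * ‖φ a‖ ^ 4 * ‖α - α'‖ *
        (‖moebius φ g α - α‖ * ‖moebius φ g α - α'‖ *
          (‖moebius φ g α' - α‖ * ‖moebius φ g α' - α'‖)) := by
  obtain ⟨x, y, hxy, hxy'⟩ := h.exists_mul_moebius_sub_eq g
  have hden := h.isIrrational_fst.den_ne_zero g
  have hden' := h.isIrrational_snd.den_ne_zero g
  by_cases hzero : x = 0 ∧ y = 0
  · have ha := h.map_ne_zero
    simp only [hzero.1, hzero.2, map_zero, zero_mul, sub_zero, mul_eq_zero_iff_left, ne_eq,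
      pow_eq_zero_iff, OfNat.ofNat_ne_zero, not_false_eq_true, ha, hden, hden',
      mul_eq_zero_iff_left] at hxy hxy'
    rw [← or_assoc]
    exact .inl (h.moebius_eq_or_eq_swap_of_mul_eq_zero hxy hxy')
  · refine .inr (.inr ?_)
    have hgap := hD x y (not_and_or.1 hzero)
    rw [h.isIrrational_fst.norm_moebius_sub_moebius hφ h.isIrrational_snd]
    rw [← hxy, ← hxy'] at hgap
    simp only [norm_mul, norm_pow] at hgap
    rw [div_pow, div_le_iff₀ (by positivity)]
    calc _ = ‖α - α'‖ * ‖α - α'‖ := sq _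
      _ ≤ _ := mul_le_mul_of_nonneg_left hgap (norm_nonneg _)
      _ = _ := by ring

end Normed

end IsConjugatePair

end ConjugatePair

section CuspRatio

variable {R L : Type*} [CommRing R] [NormedField L] [IsUltrametricDist L] {φ : R →+* L}
  {C D E M : ℝ} {α α' β β' : L} {p q : R}

theorem norm_mul_norm_sub_eq_of_norm_lt {x y z w : L} (h : ‖x - y * z‖ < ‖x - y * w‖) :
    ‖y‖ * ‖z - w‖ = ‖x - y * w‖ := by
  rw [← norm_sub_eq_right_of_norm_lt h, sub_sub_sub_cancel_left, ← mul_sub, norm_mul, norm_sub_rev]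

theorem IsBadlyApprox.sq_norm_sub_le_of_mul_norm_form_lt (hβ : IsBadlyApprox φ D β β')
    (hp : φ p - φ q * α ≠ 0) (hM : 1 < M) (hratio : ‖φ p - φ q * α'‖ = M * ‖φ p - φ q * α‖)
    (hprod : ‖φ p - φ q * α‖ * ‖φ p - φ q * α'‖ ≤ C)
    (hlt : M * ‖φ p - φ q * β‖ < ‖φ p - φ q * β'‖) :
    ‖α - α'‖ ^ 2 ≤ D * C * ‖β - β'‖ := by
  have hα0 := norm_pos_iff.2 hp
  have hpq : p ≠ 0 ∨ q ≠ 0 := by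
    by_contra! h
    simp [h.1, h.2] at hp
  have hαq := norm_mul_norm_sub_eq_of_norm_lt (hratio ▸ lt_mul_left hα0 hM)
  have hβq := norm_mul_norm_sub_eq_of_norm_lt
    ((le_mul_of_one_le_left (norm_nonneg _) hM.le).trans_lt hlt)
  have hgap0 : 0 < ‖β - β'‖ := by
    refine norm_pos_iff.2 (sub_ne_zero.2 ?_)
    rintro rfl
    exact hlt.not_ge (le_mul_of_one_le_left (norm_nonneg _) hM.le)
  have hD : 0 ≤ D := (norm_nonneg _).trans hβ.norm_sub_le
  have hgap : M * ‖β - β'‖ ≤ D * ‖φ q‖ ^ 2 * ‖β - β'‖ * ‖β - β'‖ :=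
    calc M * ‖β - β'‖ ≤ M * (D * (‖φ p - φ q * β‖ * ‖φ p - φ q * β'‖)) := by
          gcongr
          exact hβ p q hpq
      _ = D * (M * ‖φ p - φ q * β‖ * ‖φ p - φ q * β'‖) := by ring
      _ ≤ D * (‖φ p - φ q * β'‖ * ‖φ p - φ q * β'‖) := by gcongr
      _ = D * ‖φ q‖ ^ 2 * ‖β - β'‖ * ‖β - β'‖ := by rw [← hβq]; ring
  refine le_of_mul_le_mul_left ?_ (one_pos.trans hM)
  calc M * ‖α - α'‖ ^ 2 ≤ D * ‖φ q‖ ^ 2 * ‖β - β'‖ * ‖α - α'‖ ^ 2 := by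
        gcongr
        exact le_of_mul_le_mul_right hgap hgap0
    _ = D * ‖β - β'‖ * (M * (‖φ p - φ q * α‖ * ‖φ p - φ q * α'‖)) := by
        rw [← mul_assoc M, ← hratio, ← hαq]
        ring
    _ ≤ D * ‖β - β'‖ * (M * C) := by gcongr
    _ = M * (D * C * ‖β - β'‖) := by ring

theorem IsBadlyApprox.mul_norm_sub_le_of_mul_norm_form_lt (hα : IsBadlyApprox φ D α α')
    (hβ : IsBadlyApprox φ D β β') (hp : φ p - φ q * α ≠ 0) (hM : 1 < M)
    (hratio : ‖φ p - φ q * α'‖ = M * ‖φ p - φ q * α‖)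
    (hlt : M * ‖φ p - φ q * β‖ < ‖φ p - φ q * β'‖) :
    M * ‖β - α‖ ≤ D := by
  have hα0 := norm_pos_iff.2 hp
  have hαq := norm_mul_norm_sub_eq_of_norm_lt (hratio ▸ lt_mul_left hα0 hM)
  have hβq := norm_mul_norm_sub_eq_of_norm_lt
    ((le_mul_of_one_le_left (norm_nonneg _) hM.le).trans_lt hlt)
  have hq : 0 < ‖φ q‖ := by
    refine norm_pos_iff.2 fun hq ↦ ?_
    simp only [hq, zero_mul, sub_zero] at hratio hα0
    exact (lt_mul_left hα0 hM).ne hratio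
  refine le_of_mul_le_mul_left ?_ hq
  calc ‖φ q‖ * (M * ‖β - α‖) = M * (‖φ q‖ * ‖β - α‖) := by ring
    _ = M * ‖(φ p - φ q * α) - (φ p - φ q * β)‖ := by
        rw [← norm_mul]
        exact congrArg (M * ‖·‖) (by ring)
    _ ≤ M * max ‖φ p - φ q * α‖ ‖φ p - φ q * β‖ := by
        gcongr
        exact norm_sub_le_max_norm _ _
    _ = max (‖φ q‖ * ‖α - α'‖) (M * ‖φ p - φ q * β‖) := by
        rw [mul_max_of_nonneg _ _ (by positivity), hαq, hratio]
    _ ≤ ‖φ q‖ * D := by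
        refine max_le (by gcongr; exact hα.norm_sub_le) (hlt.le.trans ?_)
        rw [← hβq]
        gcongr
        exact hβ.norm_sub_le

/-- If a cusp is much closer to `β` than to `β'`, then `β` is close to `α` while `|β - β'|` is
bounded below, against the mutual repulsion of the two pairs. -/
theorem IsBadlyApprox.norm_form_snd_le_of_repel (hα : IsBadlyApprox φ D α α')
    (hβ : IsBadlyApprox φ D β β') (hE : 0 ≤ E)
    (hrepel : ‖β - β'‖ ^ 2 ≤ E * (‖β - α‖ * ‖β - α'‖ * (‖β' - α‖ * ‖β' - α'‖)))
    (hM : 1 < M) (hlarge : E * D ^ 6 * C ^ 2 < M * ‖α - α'‖ ^ 4) (hp : φ p - φ q * α ≠ 0)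
    (hratio : ‖φ p - φ q * α'‖ = M * ‖φ p - φ q * α‖)
    (hprod : ‖φ p - φ q * α‖ * ‖φ p - φ q * α'‖ ≤ C) :
    ‖φ p - φ q * β'‖ ≤ M * ‖φ p - φ q * β‖ := by
  by_contra! hlt
  have hgap := hβ.sq_norm_sub_le_of_mul_norm_form_lt hp hM hratio hprod hlt
  have hclose := hα.mul_norm_sub_le_of_mul_norm_form_lt hβ hp hM hratio hlt
  have htri {x y z : L} (hxy : ‖x - y‖ ≤ D) (hyz : ‖y - z‖ ≤ D) : ‖x - z‖ ≤ D :=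
    sub_add_sub_cancel x y z ▸ (IsUltrametricDist.norm_add_le_max _ _).trans (max_le hxy hyz)
  have hβα : ‖β - α‖ ≤ D := (le_mul_of_one_le_left (norm_nonneg _) hM.le).trans hclose
  have hβ'α : ‖β' - α‖ ≤ D := htri hβ.symm.norm_sub_le hβα
  have hD : 0 ≤ D := (norm_nonneg _).trans hβα
  refine hlarge.not_ge ?_
  calc M * ‖α - α'‖ ^ 4 = M * (‖α - α'‖ ^ 2) ^ 2 := by ring
    _ ≤ M * (D * C * ‖β - β'‖) ^ 2 := by gcongr
    _ = M * D ^ 2 * C ^ 2 * ‖β - β'‖ ^ 2 := by ring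
    _ ≤ M * D ^ 2 * C ^ 2 * (E * (‖β - α‖ * D * (D * D))) := by
      gcongr
      refine hrepel.trans ?_
      gcongr
      · exact htri hβα hα.norm_sub_le
      · exact htri hβ'α hα.norm_sub_le
    _ = M * ‖β - α‖ * (E * D ^ 5 * C ^ 2) := by ring
    _ ≤ D * (E * D ^ 5 * C ^ 2) := by gcongr
    _ = E * D ^ 6 * C ^ 2 := by ring

end CuspRatio

section Unipotent

variable {R : Type*} [CommRing R]

/-- The unipotent one-parameter subgroup of `GL₂(R)` fixing the cusp `p / q`, namely
`τ ↦ 1 + τ (p, q)ᵗ (q, -p)`. -/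
def unipotent (p q : R) : Multiplicative R →* GL (Fin 2) R :=
  MonoidHom.toHomUnits
    { toFun τ := !![1 + τ.toAdd * p * q, -(τ.toAdd * p ^ 2); τ.toAdd * q ^ 2, 1 - τ.toAdd * p * q]
      map_one' := by simp [Matrix.one_fin_two]
      map_mul' σ τ := by
        simp only [toAdd_mul, Matrix.mul_fin_two]
        congr! 3 <;> ring_nf }

theorem coe_unipotent (p q τ : R) : (unipotent p q (.ofAdd τ) : Matrix (Fin 2) (Fin 2) R) =
    !![1 + τ * p * q, -(τ * p ^ 2); τ * q ^ 2, 1 - τ * p * q] :=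
  rfl

theorem moebius_unipotent_one_zero {L : Type*} [Field L] (φ : R →+* L) (τ : R) (z : L) :
    moebius φ (unipotent 1 0 (.ofAdd τ)) z = z - φ τ := by
  simp [moebius, coe_unipotent, sub_eq_add_neg]

theorem IsIrrational.inv_moebius_unipotent_sub {L : Type*} [Field L] {φ : R →+* L} {z : L}
    (hz : IsIrrational φ z) (p : R) {q : R} (hq : φ q ≠ 0) (τ : R) :
    (moebius φ (unipotent p q (.ofAdd τ)) z - φ p / φ q)⁻¹ =
      (z - φ p / φ q)⁻¹ + φ (τ * q ^ 2) := by
  have hden := hz.den_ne_zero (unipotent p q (.ofAdd τ))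
  have hzp : z * φ q - φ p ≠ 0 := by
    rw [← neg_ne_zero, neg_sub, mul_comm]
    exact hz p q (.inr (ne_zero_of_map hq))
  simp only [moebius, coe_unipotent, Matrix.of_apply, Matrix.cons_val', Matrix.cons_val_zero,
    Matrix.cons_val_one, Matrix.cons_val_fin_one, map_add, map_sub, map_mul, map_pow, map_neg,
    map_one] at hden ⊢
  rw [div_sub_div _ _ hden hq, sub_div' hq, inv_div, inv_div, div_add' _ _ _ hzp, div_eq_div_iff]
  · ring
  · convert hzp using 1
    ring
  · exact hzp

theorem IsIrrational.moebius_unipotent_inv_add {L : Type*} [Field L] {φ : R →+* L} {z : L}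
    {p q : R} (hz : IsIrrational φ (z⁻¹ + φ p / φ q)) (hq : φ q ≠ 0) (τ : R) :
    moebius φ (unipotent p q (.ofAdd τ)) (z⁻¹ + φ p / φ q) =
      (z + φ (τ * q ^ 2))⁻¹ + φ p / φ q := by
  rw [← sub_eq_iff_eq_add, ← inv_eq_iff_eq_inv, hz.inv_moebius_unipotent_sub p hq,
    add_sub_cancel_right, inv_inv]

theorem exists_lt_norm_map_and_apply_mem {G L : Type*} [Group G] [NormedField L] {φ : R →+* L}
    {X : R} (hX : 1 < ‖φ X‖) (u : Multiplicative R →* G) (H : Subgroup G) [H.FiniteIndex] (N : ℝ) :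
    ∃ τ, N < ‖φ τ‖ ∧ u (.ofAdd τ) ∈ H := by
  have : (H.comap u).FiniteIndex :=
    ⟨H.index_comap u ▸ (Subgroup.isFiniteRelIndex_of_finiteIndex (H := H)).relIndex_ne_zero⟩
  by_contra! hbdd
  obtain ⟨B, hB⟩ := (Set.finite_range fun c : Multiplicative R ⧸ H.comap u ↦
    ‖φ c.out.toAdd‖).bddAbove
  obtain ⟨n, hn⟩ := pow_unbounded_of_one_lt (B + N) hX
  set c : Multiplicative R ⧸ H.comap u :=
    QuotientGroup.mk (.ofAdd (X ^ n))
  have hmem : u (.ofAdd (-c.out.toAdd + X ^ n)) ∈ H := QuotientGroup.eq.1 c.out_eq'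
  have hN : ‖φ (-c.out.toAdd + X ^ n)‖ ≤ N := not_lt.1 fun h ↦ hbdd _ h hmem
  refine hn.not_ge ?_
  calc ‖φ X‖ ^ n = ‖φ c.out.toAdd + φ (-c.out.toAdd + X ^ n)‖ := by simp
    _ ≤ B + N := (norm_add_le _ _).trans (add_le_add (hB ⟨c, rfl⟩) hN)

end Unipotent

section PairOrbit

/-- The pairs of conjugate elements of the orbit of `{α, α'}` under a subgroup `Γ` of `GL₂(R)`, in
both orders. -/
def pairOrbit {R L : Type*} [CommRing R] [Field L] (φ : R →+* L) (Γ : Subgroup (GL (Fin 2) R))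
    (α α' : L) : Set (L × L) :=
  {pr | ∃ g ∈ Γ, pr = (moebius φ g α, moebius φ g α') ∨ pr = (moebius φ g α', moebius φ g α)}

section Field

variable {R L : Type*} [CommRing R] [Field L] {φ : R →+* L} {Γ : Subgroup (GL (Fin 2) R)}
  {a b c : R} {α α' β β' : L}

theorem thetaPairsG_map {K : Type*} [Field K] (f : R →+* K) (ι : K →+* L) :
    thetaPairsG ι (Γ.map (Matrix.GeneralLinearGroup.map f)) α α' = pairOrbit (ι.comp f) Γ α α' := by
  ext pr
  simp only [thetaPairsG, Subgroup.mem_map, Set.mem_ofPred_eq, exists_exists_and_eq_and]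
  rfl

theorem self_mem_pairOrbit : (α, α') ∈ pairOrbit φ Γ α α' :=
  ⟨1, Γ.one_mem, .inl (by simp only [moebius_one])⟩

theorem swap_mem_pairOrbit (h : (β, β') ∈ pairOrbit φ Γ α α') : (β', β) ∈ pairOrbit φ Γ α α' := by
  obtain ⟨g, hg, h | h⟩ := h <;> obtain ⟨rfl, rfl⟩ := Prod.mk.inj h
  exacts [⟨g, hg, .inr rfl⟩, ⟨g, hg, .inl rfl⟩]

namespace IsConjugatePair

theorem ne_of_mem_pairOrbit (h : IsConjugatePair φ a b c α α')
    (hβ : (β, β') ∈ pairOrbit φ Γ α α') : β ≠ β' := by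
  obtain ⟨g, -, hβ | hβ⟩ := hβ <;> obtain ⟨rfl, rfl⟩ := Prod.mk.inj hβ
  exacts [h.moebius_ne g, (h.moebius_ne g).symm]

theorem moebius_mem_pairOrbit (h : IsConjugatePair φ a b c α α') {γ : GL (Fin 2) R} (hγ : γ ∈ Γ)
    (hβ : (β, β') ∈ pairOrbit φ Γ α α') :
    (moebius φ γ β, moebius φ γ β') ∈ pairOrbit φ Γ α α' := by
  obtain ⟨g, hg, hβ⟩ := hβ
  refine ⟨γ * g, Γ.mul_mem hγ hg, ?_⟩
  rw [h.isIrrational_fst.moebius_mul, h.isIrrational_snd.moebius_mul]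
  exact hβ.imp (by rintro ⟨⟩; rfl) (by rintro ⟨⟩; rfl)

theorem isPeriod_pairOrbit (h : IsConjugatePair φ a b c α α') {τ : R}
    (hτ : unipotent 1 0 (.ofAdd τ) ∈ Γ) : IsPeriod (pairOrbit φ Γ α α') (φ τ) := fun β β' ↦ by
  have hτ' : unipotent 1 0 (.ofAdd (-τ)) ∈ Γ := by simpa only [ofAdd_neg, map_inv, inv_mem_iff]
  refine ⟨fun hβ ↦ ?_, fun hβ ↦ ?_⟩
  · simpa [moebius_unipotent_one_zero] using h.moebius_mem_pairOrbit hτ hβ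
  · simpa only [moebius_unipotent_one_zero, map_neg, sub_neg_eq_add] using
      h.moebius_mem_pairOrbit hτ' hβ

end IsConjugatePair

end Field

section Normed

variable {R L : Type*} [CommRing R] [NormedField L] {φ : R →+* L} {Γ : Subgroup (GL (Fin 2) R)}
  {a b c : R} {C D M : ℝ} {α α' β β' : L}

theorem IsBadlyApprox.isIrrational (h : IsBadlyApprox φ D α α') (hne : α ≠ α') :
    IsIrrational φ α := fun p q hpq h0 ↦ by
  have := h p q hpq
  rw [h0, norm_zero, zero_mul, mul_zero, norm_le_zero_iff, sub_eq_zero] at this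
  exact hne this

namespace IsConjugatePair

theorem isBadlyApprox_of_mem_pairOrbit (hφ : ∀ r, r ≠ 0 → 1 ≤ ‖φ r‖)
    (h : IsConjugatePair φ a b c α α') (hD : IsBadlyApprox φ D α α')
    (hβ : (β, β') ∈ pairOrbit φ Γ α α') : IsBadlyApprox φ D β β' := by
  obtain ⟨g, -, hβ | hβ⟩ := hβ <;> obtain ⟨rfl, rfl⟩ := Prod.mk.inj hβ
  · exact hD.moebius hφ h.isIrrational_fst h.isIrrational_snd g
  · exact hD.symm.moebius hφ h.isIrrational_snd h.isIrrational_fst g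

theorem eq_or_norm_sub_sq_le_of_mem_pairOrbit (hφ : ∀ r, r ≠ 0 → 1 ≤ ‖φ r‖)
    (h : IsConjugatePair φ a b c α α') (hD : IsBadlyApprox φ D α α')
    (hβ : (β, β') ∈ pairOrbit φ Γ α α') :
    (β = α ∧ β' = α') ∨ (β = α' ∧ β' = α) ∨
      ‖β - β'‖ ^ 2 ≤ D * ‖φ a‖ ^ 4 * ‖α - α'‖ *
        (‖β - α‖ * ‖β - α'‖ * (‖β' - α‖ * ‖β' - α'‖)) := by
  obtain ⟨g, -, hβ | hβ⟩ := hβ <;> obtain ⟨rfl, rfl⟩ := Prod.mk.inj hβ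
  · exact h.moebius_eq_or_norm_sub_sq_le hφ hD g
  · rcases h.moebius_eq_or_norm_sub_sq_le hφ hD g with h₁ | h₁ | h₁
    · exact .inr (.inl h₁.symm)
    · exact .inl h₁.symm
    · exact .inr (.inr (by rwa [norm_sub_rev, mul_comm (‖_‖ * _) (‖_‖ * _)]))

theorem norm_form_snd_le_of_mem_pairOrbit [IsUltrametricDist L] (hφ : ∀ r, r ≠ 0 → 1 ≤ ‖φ r‖)
    (h : IsConjugatePair φ a b c α α') (hD : IsBadlyApprox φ D α α') {p q : R} (hM : 1 < M)
    (hlarge : D * ‖φ a‖ ^ 4 * ‖α - α'‖ * D ^ 6 * C ^ 2 < M * ‖α - α'‖ ^ 4)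
    (hp : φ p - φ q * α ≠ 0) (hratio : ‖φ p - φ q * α'‖ = M * ‖φ p - φ q * α‖)
    (hprod : ‖φ p - φ q * α‖ * ‖φ p - φ q * α'‖ ≤ C) (hβ : (β, β') ∈ pairOrbit φ Γ α α') :
    ‖φ p - φ q * β'‖ ≤ M * ‖φ p - φ q * β‖ := by
  have hD0 : 0 ≤ D := (norm_nonneg _).trans hD.norm_sub_le
  rcases h.eq_or_norm_sub_sq_le_of_mem_pairOrbit hφ hD hβ with ⟨rfl, rfl⟩ | ⟨rfl, rfl⟩ | hrepel
  · exact hratio.le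
  · rw [hratio]
    exact (le_mul_of_one_le_left (norm_nonneg _) hM.le).trans
      (le_mul_of_one_le_left (by positivity) hM.le)
  · exact hD.norm_form_snd_le_of_repel (h.isBadlyApprox_of_mem_pairOrbit hφ hD hβ) (by positivity)
      hrepel hM hlarge hp hratio hprod

end IsConjugatePair

end Normed

end PairOrbit

section AtCusp

open scoped Pointwise

/-- A set of pairs seen in the coordinate `z - ρ`, which puts the cusp `ρ` at `0`. -/
def atCusp {L : Type*} [Add L] (Θ : Set (L × L)) (ρ : L) : Set (L × L) :=
  {pr | (pr.1 + ρ, pr.2 + ρ) ∈ Θ}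

theorem IsPeriod.atCusp {G : Type*} [AddCommSemigroup G] {Θ : Set (G × G)} {t : G}
    (h : IsPeriod Θ t) (ρ : G) : IsPeriod (atCusp Θ ρ) t := fun b b' ↦ by
  simpa only [_root_.atCusp, Set.mem_ofPred_eq, add_right_comm] using h (b + ρ) (b' + ρ)

variable {R L : Type*} [CommRing R] [NormedField L] {φ : R →+* L} {Γ : Subgroup (GL (Fin 2) R)}
  {a b c p q : R} {D M : ℝ} {α α' : L} {Θ : Set (L × L)}

theorem norm_sub_map_div_map (hq : φ q ≠ 0) (p : R) (z : L) :
    ‖z - φ p / φ q‖ = ‖φ p - φ q * z‖ / ‖φ q‖ := by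
  rw [← norm_div, sub_div, mul_div_cancel_left₀ _ hq, norm_sub_rev]

theorem isCuspBounded_atCusp (hswap : ∀ {β β'}, (β, β') ∈ Θ → (β', β) ∈ Θ)
    (hne : ∀ {β β'}, (β, β') ∈ Θ → β ≠ β')
    (hbad : ∀ {β β'}, (β, β') ∈ Θ → IsBadlyApprox φ D β β')
    (hq : φ q ≠ 0) (hratio : ∀ {β β'}, (β, β') ∈ Θ → ‖φ p - φ q * β'‖ ≤ M * ‖φ p - φ q * β‖) :
    IsCuspBounded (max D (D * ‖φ q‖ ^ 2)) M (atCusp Θ (φ p / φ q)) := by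
  set ρ := φ p / φ q
  have hq0 := norm_pos_iff.2 hq
  have hnorm (z : L) : ‖φ p - φ q * (z + ρ)‖ = ‖φ q‖ * ‖z‖ := by
    rw [← add_sub_cancel_right z ρ, norm_sub_map_div_map hq, mul_div_cancel₀ _ hq0.ne',
      sub_add_cancel]
  have hgap {z z' : L} (h : (z, z') ∈ atCusp Θ ρ) :
      ‖z - z'‖ ≤ D * ‖φ q‖ ^ 2 * (‖z‖ * ‖z'‖) := by
    have := hbad h p q (.inr (ne_zero_of_map hq))
    rw [add_sub_add_right_eq_sub, hnorm, hnorm] at this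
    exact this.trans_eq (by ring)
  have hzero {z z' : L} (h : (z, z') ∈ atCusp Θ ρ) : z ≠ 0 := by
    rintro rfl
    have hz' : 0 = z' := by simpa [eq_comm] using hgap h
    exact hne h (congrArg (· + ρ) hz')
  exact
    { swap_mem := hswap
      fst_ne_zero := hzero
      norm_sub_le h := by
        simpa only [add_sub_add_right_eq_sub] using (hbad h).norm_sub_le.trans (le_max_left _ _)
      norm_inv_sub_inv_le {z z'} h := by
        have hz := norm_pos_iff.2 (hzero h)
        have hz' := norm_pos_iff.2 (hzero (hswap h))
        rw [← dist_eq_norm, dist_inv_inv₀ (hzero h) (hzero (hswap h)), dist_eq_norm]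
        exact ((div_le_iff₀ (by positivity)).2 (hgap h)).trans (le_max_right _ _)
      norm_snd_le {z z'} h := by
        have := hratio h
        rw [hnorm, hnorm, mul_left_comm] at this
        exact le_of_mul_le_mul_left this hq0 }

namespace IsConjugatePair

theorem isPeriod_inv_atCusp (hφ : ∀ r, r ≠ 0 → 1 ≤ ‖φ r‖) (h : IsConjugatePair φ a b c α α')
    (hq : φ q ≠ 0) {τ : R} (hτ : unipotent p q (.ofAdd τ) ∈ Γ) :
    IsPeriod (atCusp (pairOrbit φ Γ α α') (φ p / φ q))⁻¹ (φ (τ * q ^ 2)) := by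
  have hirr {β β' : L} (hβ : (β, β') ∈ pairOrbit φ Γ α α') : IsIrrational φ β :=
    (h.isBadlyApprox_of_mem_pairOrbit hφ (h.isBadlyApprox hφ) hβ).isIrrational
      (h.ne_of_mem_pairOrbit hβ)
  have shift {τ : R} (hτ : unipotent p q (.ofAdd τ) ∈ Γ) {z z' : L}
      (hz : (z⁻¹ + φ p / φ q, z'⁻¹ + φ p / φ q) ∈ pairOrbit φ Γ α α') :
      ((z + φ (τ * q ^ 2))⁻¹ + φ p / φ q, (z' + φ (τ * q ^ 2))⁻¹ + φ p / φ q) ∈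
        pairOrbit φ Γ α α' := by
    rw [← (hirr hz).moebius_unipotent_inv_add hq,
      ← (hirr (swap_mem_pairOrbit hz)).moebius_unipotent_inv_add hq]
    exact h.moebius_mem_pairOrbit hτ hz
  have hτ' : unipotent p q (.ofAdd (-τ)) ∈ Γ := by simpa only [ofAdd_neg, map_inv, inv_mem_iff]
  refine fun z z' ↦ ⟨fun hz ↦ ?_, fun hz ↦ shift hτ hz⟩
  have := shift hτ' hz
  rwa [neg_mul, map_neg, add_neg_cancel_right, add_neg_cancel_right] at this

theorem isCuspBounded_atCusp_pairOrbit [IsUltrametricDist L] {C : ℝ}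
    (hφ : ∀ r, r ≠ 0 → 1 ≤ ‖φ r‖) (h : IsConjugatePair φ a b c α α')
    (hD : IsBadlyApprox φ D α α') (hM : 1 < M)
    (hlarge : D * ‖φ a‖ ^ 4 * ‖α - α'‖ * D ^ 6 * C ^ 2 < M * ‖α - α'‖ ^ 4)
    (hp : φ p - φ q * α ≠ 0) (hratio : ‖φ p - φ q * α'‖ = M * ‖φ p - φ q * α‖)
    (hprod : ‖φ p - φ q * α‖ * ‖φ p - φ q * α'‖ ≤ C) (hq : φ q ≠ 0) :
    IsCuspBounded (max D (D * ‖φ q‖ ^ 2)) M (atCusp (pairOrbit φ Γ α α') (φ p / φ q)) :=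
  isCuspBounded_atCusp swap_mem_pairOrbit h.ne_of_mem_pairOrbit
    (h.isBadlyApprox_of_mem_pairOrbit hφ hD) hq
    (h.norm_form_snd_le_of_mem_pairOrbit hφ hD hM hlarge hp hratio hprod)

end IsConjugatePair

end AtCusp

section ExtremalPoint

variable {R L : Type*} [CommRing R] [NontriviallyNormedField L] [IsUltrametricDist L]
  [ProperSpace L] {φ : R →+* L} {Γ : Subgroup (GL (Fin 2) R)} {a b c : R} {α α' : L}

namespace IsConjugatePair

theorem exists_isCuspBounded_atCusp (hφ : ∀ r, r ≠ 0 → 1 ≤ ‖φ r‖)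
    (hdense : DenseRange fun x : R × nonZeroDivisors R ↦ φ x.1 / φ x.2)
    (h : IsConjugatePair φ a b c α α') :
    ∃ C : ℝ, ∀ t : L, C < ‖t‖ → 1 < ‖t‖ ∧ ∃ (p q : R) (B : ℝ), φ q ≠ 0 ∧
      ‖α' - φ p / φ q‖ = ‖t‖ * ‖α - φ p / φ q‖ ∧
      IsCuspBounded B ‖t‖ (atCusp (pairOrbit φ Γ α α') (φ p / φ q)) := by
  have hinj : Function.Injective φ := (injective_iff_map_eq_zero φ).2 fun r hr ↦ by
    by_contra hr0
    simpa [hr] using (hφ r hr0).trans_lt' one_pos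
  obtain ⟨d, hd⟩ := exists_forall_exists_norm_sub_map_le hφ hdense
  have hD := h.isBadlyApprox hφ
  set D := ‖φ a‖ * ‖α - α'‖
  obtain ⟨C, hC⟩ := hD.exists_cusp_norm_form_eq hinj hd h.ne
  have hgap : 0 < ‖α - α'‖ := norm_pos_iff.2 (sub_ne_zero.2 h.ne)
  refine ⟨max 1 (D * ‖φ a‖ ^ 4 * ‖α - α'‖ * D ^ 6 * C ^ 2 / ‖α - α'‖ ^ 4), fun t ht ↦ ?_⟩
  obtain ⟨ht1, ht⟩ := max_lt_iff.1 ht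
  obtain ⟨p, q, hp, hratio, hprod⟩ := hC t ht1.le
  have hq : φ q ≠ 0 := fun hq ↦ by
    have hp0 := norm_pos_iff.2 hp
    simp only [hq, zero_mul, sub_zero] at hratio hp0
    exact (lt_mul_left hp0 ht1).ne hratio
  refine ⟨ht1, p, q, _, hq, ?_, h.isCuspBounded_atCusp_pairOrbit hφ hD ht1
    ((div_lt_iff₀ (by positivity)).1 ht) hp hratio hprod hq⟩
  rw [norm_sub_map_div_map hq, norm_sub_map_div_map hq, hratio, mul_div_assoc]

theorem exists_extremal_point (hφ : ∀ r, r ≠ 0 → 1 ≤ ‖φ r‖)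
    (hdense : DenseRange fun x : R × nonZeroDivisors R ↦ φ x.1 / φ x.2) [Γ.FiniteIndex]
    (h : IsConjugatePair φ a b c α α') :
    ∃ C : ℝ, ∀ t : L, C < ‖t‖ → 1 < ‖t‖ ∧ ∃ x,
      (∀ {β β'}, (β, β') ∈ pairOrbit φ Γ α α' → ‖β - β'‖ ≤ ‖t‖ * ‖x - β‖) ∧
      ∀ ε > 0, ∃ β β', (β, β') ∈ pairOrbit φ Γ α α' ∧ 0 < ‖β - β'‖ ∧ ‖β - β'‖ < ε ∧
        ‖β - β'‖ = ‖t‖ * ‖x - β‖ := by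
  obtain ⟨C, hC⟩ := h.exists_isCuspBounded_atCusp (Γ := Γ) hφ hdense
  obtain ⟨X, hX⟩ := exists_one_lt_norm_map hφ hdense
  refine ⟨C, fun t ht ↦ ?_⟩
  obtain ⟨ht1, p, q, B, hq, hratio, hbdd⟩ := hC t ht
  set ρ := φ p / φ q
  obtain ⟨σ, hσ, hσΓ⟩ := exists_lt_norm_map_and_apply_mem hX (unipotent 1 0) Γ (max B ‖α' - ρ‖)
  obtain ⟨τ, hτ, hτΓ⟩ := exists_lt_norm_map_and_apply_mem hX (unipotent p q) Γ
    (max B ‖α - ρ‖⁻¹)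
  have hτq : ‖φ τ‖ ≤ ‖φ (τ * q ^ 2)‖ := by
    rw [map_mul, map_pow, norm_mul, norm_pow]
    exact le_mul_of_one_le_right (norm_nonneg _) (one_le_pow₀ (hφ q (ne_zero_of_map hq)))
  obtain ⟨hσB, hσα⟩ := max_lt_iff.1 hσ
  obtain ⟨hτB, hτα⟩ := max_lt_iff.1 (hτ.trans_le hτq)
  have hmem : (α - ρ, α' - ρ) ∈ atCusp (pairOrbit φ Γ α α') ρ := by
    simpa [atCusp] using self_mem_pairOrbit
  obtain ⟨x, hx, hx'⟩ := hbdd.exists_extremal_point hσB hτB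
    ((h.isPeriod_pairOrbit hσΓ).atCusp ρ) (h.isPeriod_inv_atCusp hφ hq hτΓ) ht1 hmem hratio hσα
    (inv_lt_of_inv_lt₀ (norm_pos_iff.2 (hbdd.fst_ne_zero hmem)) hτα)
  refine ⟨ht1, x + ρ, fun {β β'} hβ ↦ ?_, fun ε hε ↦ ?_⟩
  · have hβρ : (β - ρ, β' - ρ) ∈ atCusp (pairOrbit φ Γ α α') ρ := by simpa [atCusp] using hβ
    simpa [sub_sub_eq_add_sub] using hx hβρ
  · obtain ⟨β, β', hβ, hpos, hlt, heq⟩ := hx' ε hε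
    refine ⟨β + ρ, β' + ρ, hβ, ?_⟩
    simpa only [add_sub_add_right_eq_sub] using ⟨hpos, hlt, heq⟩

end IsConjugatePair

end ExtremalPoint

section Spectrum

theorem liminf_eq_of_eventually_le_of_frequently_le {X : Type*} {f : Filter X} {u : X → ℝ} {c : ℝ}
    (hle : ∀ᶠ x in f, c ≤ u x) (hge : ∃ᶠ x in f, u x ≤ c) : liminf u f = c :=
  le_antisymm (liminf_le_of_frequently_le hge ⟨c, eventually_map.2 hle⟩)
    (le_liminf_of_le (IsCoboundedUnder.of_frequently_le hge) hle)

theorem capproxG_norm_eq {L : Type*} [NormedField L] {Θ : Set (L × L)} {x : L} {c : ℝ}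
    (hle : ∀ pr ∈ Θ, c ≤ ‖x - pr.1‖ / ‖pr.1 - pr.2‖)
    (heq : ∀ ε > 0, ∃ pr ∈ Θ, ‖pr.1 - pr.2‖ < ε ∧ ‖x - pr.1‖ / ‖pr.1 - pr.2‖ = c) :
    capproxG norm Θ x = c := by
  refine liminf_eq_of_eventually_le_of_frequently_le
    ((eventually_principal.2 hle).filter_mono inf_le_left) ?_
  rw [inf_comm, ((Metric.nhds_basis_ball.comap _).inf_principal Θ).frequently_iff]
  intro ε hε
  obtain ⟨pr, hpr, hlt, heq⟩ := heq ε hε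
  exact ⟨pr, ⟨by simpa using hlt, hpr⟩, heq.le⟩

theorem isIrrational_of_approx {R L : Type*} [CommRing R] [NormedField L] [IsUltrametricDist L]
    {φ : R →+* L} {D : ℝ} {x : L}
    (h : ∀ ε > 0, ∃ β β', IsBadlyApprox φ D β β' ∧ 0 < ‖β - β'‖ ∧ ‖β - β'‖ < ε ∧
      ‖x - β‖ ≤ ‖β - β'‖) :
    IsIrrational φ x := fun p q hpq hx ↦ by
  obtain ⟨β, β', hbad, hpos, hlt, hle⟩ := h (|D| * ‖φ q‖ ^ 2 + 1)⁻¹ (by positivity)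
  have hform (z : L) : ‖φ p - φ q * z‖ = ‖φ q‖ * ‖x - z‖ := by
    rw [← norm_mul, mul_sub, ← sub_eq_zero.1 hx]
  have hle' : ‖x - β'‖ ≤ ‖β - β'‖ := by
    rw [← sub_add_sub_cancel x β β']
    exact (IsUltrametricDist.norm_add_le_max _ _).trans (max_le hle le_rfl)
  have hgap : 1 * ‖β - β'‖ ≤ |D| * ‖φ q‖ ^ 2 * ‖β - β'‖ * ‖β - β'‖ :=
    calc 1 * ‖β - β'‖ ≤ D * (‖φ q‖ * ‖x - β‖ * (‖φ q‖ * ‖x - β'‖)) := by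
          simpa only [one_mul, hform] using hbad p q hpq
      _ ≤ |D| * (‖φ q‖ * ‖β - β'‖ * (‖φ q‖ * ‖β - β'‖)) := by
          gcongr
          exact le_abs_self D
      _ = _ := by ring
  have hone := le_of_mul_le_mul_right hgap hpos
  rw [lt_inv_comm₀ hpos (by positivity), lt_inv_comm₀ (by positivity) hpos] at hlt
  rw [← one_div, lt_div_iff₀ (by positivity)] at hlt
  nlinarith

variable {R K L : Type*} [CommRing R] [Field K] [Algebra R K] [IsFractionRing R K]

theorem isIrrational_comp_algebraMap_iff [Field L] {ι : K →+* L} {z : L} :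
    IsIrrational (ι.comp (algebraMap R K)) z ↔ ∀ y, ι y ≠ z := by
  have := (algebraMap R K).domain_nontrivial
  simp only [IsIrrational, RingHom.comp_apply, ne_eq, sub_eq_zero]
  refine ⟨fun hz y hy ↦ ?_, fun hz p q hpq h ↦ ?_⟩
  · obtain ⟨p, q, hq, rfl⟩ := IsFractionRing.div_surjective R y
    have hq0 := nonZeroDivisors.ne_zero hq
    refine hz p q (.inr hq0) ?_
    rw [← hy, map_div₀, mul_div_cancel₀]
    simpa using hq0
  · have hq : q ≠ 0 := by
      rintro rfl
      simp_all
    refine hz (algebraMap R K p / algebraMap R K q) ?_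
    rw [map_div₀, h, mul_div_cancel_left₀]
    simpa using hq

theorem denseRange_div_of_denseRange [Field L] [TopologicalSpace L] {ι : K →+* L}
    (hι : DenseRange ι) : DenseRange fun x : R × nonZeroDivisors R ↦
      ι.comp (algebraMap R K) x.1 / ι.comp (algebraMap R K) x.2 := by
  refine hι.mono ?_
  rintro _ ⟨y, rfl⟩
  obtain ⟨p, q, hq, rfl⟩ := IsFractionRing.div_surjective R y
  exact ⟨(p, ⟨q, hq⟩), (map_div₀ ι _ _).symm⟩

variable (R) in
theorem exists_isConjugatePair [Field L] {ι : K →+* L} {a b c : K} {α α' : L} (ha : a ≠ 0)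
    (hα : ι a * α ^ 2 + ι b * α + ι c = 0) (hα' : ι a * α' ^ 2 + ι b * α' + ι c = 0)
    (hirr : ∀ y, ι y ≠ α) (hne : α' ≠ α) :
    ∃ a' b' c' : R, IsConjugatePair (ι.comp (algebraMap R K)) a' b' c' α α' := by
  obtain ⟨d, hd⟩ := IsLocalization.exist_integer_multiples_of_finite (nonZeroDivisors R) ![a, b, c]
  obtain ⟨⟨a', ha'⟩, ⟨b', hb'⟩, ⟨c', hc'⟩⟩ := And.intro (hd 0) (And.intro (hd 1) (hd 2))
  simp only [Algebra.smul_def, Matrix.cons_val] at ha' hb' hc'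
  have := (algebraMap R K).domain_nontrivial
  have hd0 : algebraMap R K d ≠ 0 :=
    IsLocalization.to_map_ne_zero_of_mem_nonZeroDivisors K le_rfl d.2
  have hsum : ι a * (α + α') = -ι b :=
    mul_left_cancel₀ (sub_ne_zero.2 hne) (by linear_combination hα' - hα)
  have hprod : ι a * (α * α') = ι c := by linear_combination α * hsum - hα
  have hirr' : ∀ y, ι y ≠ α' := fun y hy ↦ hirr (-b / a - y) <| by
    rw [map_sub, map_div₀, map_neg, hy, ← hsum, mul_div_cancel_left₀ _ ((map_ne_zero ι).2 ha),
      add_sub_cancel_right]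
  exact ⟨a', b', c',
    { map_ne_zero := by simp [ha', hd0, ha]
      mul_add := by
        simp only [RingHom.comp_apply, ha', hb', map_mul]
        linear_combination ι (algebraMap R K d) * hsum
      mul_mul := by
        simp only [RingHom.comp_apply, ha', hc', map_mul]
        linear_combination ι (algebraMap R K d) * hprod
      ne := hne.symm
      isIrrational_fst := isIrrational_comp_algebraMap_iff.2 hirr
      isIrrational_snd := isIrrational_comp_algebraMap_iff.2 hirr' }⟩

theorem hall_ray_in_quadratic_spectrum_general [NontriviallyNormedField L] [IsUltrametricDist L]
    [ProperSpace L] {ι : K →+* L} (hι : DenseRange ι)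
    (hR : ∀ r : R, r ≠ 0 → 1 ≤ ‖ι (algebraMap R K r)‖) (Γ : Subgroup (GL (Fin 2) R))
    [Γ.FiniteIndex] {α α' : L} {a b c : K} (ha : a ≠ 0)
    (hα : ι a * α ^ 2 + ι b * α + ι c = 0) (hα' : ι a * α' ^ 2 + ι b * α' + ι c = 0)
    (hirr : ∀ y, ι y ≠ α) (hne : α' ≠ α) :
    ∃ C : ℝ, ∀ t : L, C < ‖t‖ → ‖t‖⁻¹ ∈ quadSpectrumG ι norm
      (thetaPairsG ι (Γ.map (Matrix.GeneralLinearGroup.map (algebraMap R K))) α α') := by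
  obtain ⟨a, b, c, h⟩ := exists_isConjugatePair R ha hα hα' hirr hne
  obtain ⟨C, hC⟩ := h.exists_extremal_point (Γ := Γ) hR (denseRange_div_of_denseRange hι)
  refine ⟨C, fun t ht ↦ ?_⟩
  obtain ⟨ht1, x, hle, heq⟩ := hC t ht
  have ht0 := one_pos.trans ht1
  rw [thetaPairsG_map]
  have hgap {pr : L × L} (hpr : pr ∈ pairOrbit (ι.comp (algebraMap R K)) Γ α α') :
      0 < ‖pr.1 - pr.2‖ := norm_pos_iff.2 (sub_ne_zero.2 (h.ne_of_mem_pairOrbit hpr))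
  have hx : IsIrrational (ι.comp (algebraMap R K)) x := isIrrational_of_approx fun ε hε ↦ by
    obtain ⟨β, β', hβ, hpos, hlt, heq⟩ := heq ε hε
    exact ⟨β, β', h.isBadlyApprox_of_mem_pairOrbit hR (h.isBadlyApprox hR) hβ, hpos, hlt,
      (le_mul_of_one_le_left (norm_nonneg _) ht1.le).trans_eq heq.symm⟩
  refine ⟨x, isIrrational_comp_algebraMap_iff.1 hx, fun pr hpr hprx ↦ ?_, (capproxG_norm_eq
    (fun pr hpr ↦ ?_) fun ε hε ↦ ?_).symm⟩
  · simpa [hprx] using (hgap hpr).trans_le (hle hpr)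
  · rw [inv_le_iff_one_le_mul₀ ht0, ← mul_div_right_comm, one_le_div (hgap hpr), mul_comm]
    exact hle hpr
  · obtain ⟨β, β', hβ, hpos, hlt, heq⟩ := heq ε hε
    refine ⟨(β, β'), hβ, hlt, ?_⟩
    rw [div_eq_iff hpos.ne', heq, inv_mul_cancel_left₀ ht0.ne']

end Spectrum

section ValuedField

theorem exists_absoluteValue_coe_eq {L : Type*} [Ring L] {A : L → ℝ} {r : ℝ} (hr : 0 ≤ r)
    (hzero : ∀ x, A x = 0 ↔ x = 0) (hmul : ∀ x y, A (x * y) = A x * A y)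
    (hadd : ∀ x y, A (x + y) ≤ max (A x) (A y)) (hval : ∀ x ≠ 0, ∃ n : ℤ, A x = r ^ n) :
    ∃ v : AbsoluteValue L ℝ, ⇑v = A := by
  have hnonneg (x : L) : 0 ≤ A x := by
    obtain rfl | hx := eq_or_ne x 0
    · exact ((hzero 0).2 rfl).ge
    · obtain ⟨n, hn⟩ := hval x hx
      exact hn ▸ zpow_nonneg hr n
  exact ⟨{
    toFun := A
    map_mul' := hmul
    nonneg' := hnonneg
    eq_zero' := hzero
    add_le' x y := (hadd x y).trans (max_le_add_of_nonneg (hnonneg x) (hnonneg y)) }, rfl⟩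

theorem completeSpace_of_forall_exists_norm_sub_lt {L : Type*} [NormedField L]
    (h : ∀ u : ℕ → L, (∀ ε > 0, ∃ N, ∀ m n, N ≤ m → N ≤ n → ‖u m - u n‖ < ε) →
      ∃ x, ∀ ε > 0, ∃ N, ∀ n, N ≤ n → ‖u n - x‖ < ε) : CompleteSpace L := by
  refine Metric.complete_of_cauchySeq_tendsto fun u hu ↦ ?_
  simp only [Metric.cauchySeq_iff, Metric.tendsto_atTop, dist_eq_norm] at hu ⊢
  exact h u fun ε hε ↦ (hu ε hε).imp fun N hN m n hm hn ↦ hN m hm n hn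

variable {L : Type*} [NontriviallyNormedField L] {ϖ : L} {s : Set L}

theorem exists_finite_forall_exists_norm_sub_le_pow (hϖ0 : ϖ ≠ 0)
    (hϖ : ∀ x : L, ‖x‖ < 1 → ‖x‖ ≤ ‖ϖ‖) (hfin : s.Finite)
    (hs : ∀ x : L, ‖x‖ ≤ 1 → ∃ y ∈ s, ‖x - y‖ < 1) (n : ℕ) :
    ∃ T : Set L, T.Finite ∧ ∀ x : L, ‖x‖ ≤ 1 → ∃ y ∈ T, ‖x - y‖ ≤ ‖ϖ‖ ^ n := by
  induction n with
  | zero => exact ⟨{0}, Set.finite_singleton 0, by simp⟩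
  | succ n ih =>
    obtain ⟨T, hT, hTs⟩ := ih
    refine ⟨Set.image2 (fun y z ↦ y + ϖ ^ n * z) T s, hT.image2 _ hfin, fun x hx ↦ ?_⟩
    obtain ⟨y, hy, hxy⟩ := hTs x hx
    have hpow : 0 < ‖ϖ‖ ^ n := pow_pos (norm_pos_iff.2 hϖ0) n
    obtain ⟨z, hz, hxyz⟩ := hs ((x - y) / ϖ ^ n) <| by rwa [norm_div, norm_pow, div_le_one hpow]
    refine ⟨_, Set.mem_image2_of_mem hy hz, ?_⟩
    calc ‖x - (y + ϖ ^ n * z)‖ = ‖ϖ‖ ^ n * ‖(x - y) / ϖ ^ n - z‖ := by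
          rw [← norm_pow, ← norm_mul, mul_sub, mul_div_cancel₀ _ (pow_ne_zero n hϖ0), sub_sub]
      _ ≤ ‖ϖ‖ ^ n * ‖ϖ‖ := by gcongr; exact hϖ _ hxyz
      _ = ‖ϖ‖ ^ (n + 1) := (pow_succ _ _).symm

theorem properSpace_of_finite_residues [CompleteSpace L] {r : ℝ} (hr : 1 < r)
    (hval : ∀ x : L, x ≠ 0 → ∃ n : ℤ, ‖x‖ = r ^ n) (hϖ0 : ϖ ≠ 0) (hϖ : ‖ϖ‖ = r⁻¹)
    (hfin : s.Finite) (hs : ∀ x : L, ‖x‖ ≤ 1 → ∃ y ∈ s, ‖x - y‖ < 1) : ProperSpace L := by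
  have hlt (x : L) (hx : ‖x‖ < 1) : ‖x‖ ≤ ‖ϖ‖ := by
    obtain rfl | hx0 := eq_or_ne x 0
    · simp
    · obtain ⟨n, hn⟩ := hval x hx0
      rw [hn] at hx ⊢
      rw [hϖ, ← zpow_neg_one]
      exact zpow_le_zpow_right₀ hr.le (by have := (zpow_lt_one_iff_right₀ hr).1 hx; lia)
  have htb : TotallyBounded (Metric.closedBall (0 : L) 1) := by
    refine Metric.totallyBounded_iff.2 fun ε hε ↦ ?_
    obtain ⟨n, hn⟩ := exists_pow_lt_of_lt_one hε (hϖ ▸ inv_lt_one_of_one_lt₀ hr)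
    obtain ⟨T, hT, hTs⟩ := exists_finite_forall_exists_norm_sub_le_pow hϖ0 hlt hfin hs n
    refine ⟨T, hT, fun x hx ↦ ?_⟩
    obtain ⟨y, hy, hxy⟩ := hTs x (mem_closedBall_zero_iff.1 hx)
    exact Set.mem_biUnion hy (mem_ball_iff_norm.2 (hxy.trans_lt hn))
  have : LocallyCompactSpace L := IsCompact.locallyCompactSpace_of_mem_nhds_of_addGroup
    (htb.isCompact_of_isClosed Metric.isClosed_closedBall)
    (Metric.closedBall_mem_nhds 0 one_pos)
  exact .of_nontriviallyNormedField_of_weaklyLocallyCompactSpace L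

end ValuedField

section Subring

theorem isFractionRing_of_forall_exists_mul_eq {K : Type*} [Field K] {R : Subring K}
    (h : ∀ x : K, ∃ p q : K, p ∈ R ∧ q ∈ R ∧ q ≠ 0 ∧ x * q = p) : IsFractionRing R K :=
  .of_field R K fun x ↦
    let ⟨p, q, hp, hq, hq0, hpq⟩ := h x
    ⟨⟨p, hp⟩, ⟨q, hq⟩, (eq_div_iff hq0).2 hpq⟩

theorem mem_range_map_algebraMap_iff {n K : Type*} [Fintype n] [DecidableEq n] [CommRing K]
    {R : Subring K} {g : GL n K} :
    g ∈ (Matrix.GeneralLinearGroup.map (n := n) (algebraMap R K)).range ↔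
      (∀ i j, g i j ∈ R) ∧ ∀ i j, (g⁻¹ : GL n K) i j ∈ R := by
  refine ⟨?_, fun ⟨hg, hg'⟩ ↦ ?_⟩
  · rintro ⟨γ, rfl⟩
    rw [← map_inv]
    exact ⟨fun i j ↦ (γ i j).2, fun i j ↦ ((γ⁻¹ : GL n R) i j).2⟩
  · let γ : Matrix n n R := .of fun i j ↦ ⟨g i j, hg i j⟩
    let γ' : Matrix n n R := .of fun i j ↦ ⟨(g⁻¹ : GL n K) i j, hg' i j⟩
    have hinj := Matrix.map_injective (m := n) (n := n) (FaithfulSMul.algebraMap_injective R K)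
    have hγ : γ.map (algebraMap R K) = g := rfl
    have hγ' : γ'.map (algebraMap R K) = (g⁻¹ : GL n K) := rfl
    refine ⟨⟨γ, γ', hinj ?_, hinj ?_⟩, Units.ext hγ⟩ <;> simp [Matrix.map_mul, hγ, hγ']

theorem exists_finiteIndex_map_eq {G H : Type*} [Group G] [Group H] {f : G →* H} {Γ : Subgroup H}
    (hΓ : Γ ≤ f.range) (hindex : (Γ.subgroupOf f.range).index ≠ 0) :
    ∃ Γ' : Subgroup G, Γ'.FiniteIndex ∧ Γ'.map f = Γ :=
  ⟨Γ.comap f, ⟨by rwa [Subgroup.index_comap]⟩, Subgroup.map_comap_eq_self hΓ⟩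

end Subring

/-- Let `K` be a function field over `𝔽_q`, `v` a normalised discrete
valuation of `K` with completion `K_v` (here: a complete nonarchimedean valued field `L ⊇ K`
with dense image, value group `q_v^ℤ` and residue field of cardinality `q_v`), and `Γ` a
finite-index subgroup of `PGL₂(R_v)` (here: of the group `G0` of `GL₂`-matrices with entries,
and inverse entries, in the affine function ring `R_v` of `v`). For every quadratic
irrational `α ∈ K_v` over `K` (with Galois conjugate `α^σ`), there exists `m_α ∈ ℕ` such
that for every integer `m ≥ m_α`, the value `q_v^{−m}` belongs to the quadratic Lagrange
spectrum `Sp(α, Γ)`: the spectrum contains a Hall ray. -/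
theorem hall_ray_in_quadratic_spectrum
    (Fq : Type*) [Field Fq] [Fintype Fq]
    (K : Type*) [Field K] [Algebra (RatFunc Fq) K]
    (hFF : FunctionField Fq K)
    (L : Type*) [Field L] (ι : K →+* L)
    (qv : ℕ) (hqv : 1 < qv)
    (A : L → ℝ)
    (hA0 : ∀ x : L, A x = 0 ↔ x = 0)
    (hAmul : ∀ x y : L, A (x * y) = A x * A y)
    (hAna : ∀ x y : L, A (x + y) ≤ max (A x) (A y))
    (hAval : ∀ x : L, x ≠ 0 → ∃ n : ℤ, A x = (qv : ℝ) ^ n)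
    (hAsurj : ∀ n : ℤ, ∃ x : L, x ≠ 0 ∧ A x = (qv : ℝ) ^ n)
    -- the residue field has cardinality q_v
    (hres : ∃ s : Finset L, s.card = qv ∧
      ∀ x : L, A x ≤ 1 → ∃ y ∈ s, A (x - y) < 1)
    -- K is dense in its completion L
    (hdense : ∀ x : L, ∀ ε : ℝ, 0 < ε → ∃ y : K, A (x - ι y) < ε)
    -- L is complete
    (hcomplete : ∀ u : ℕ → L,
      (∀ ε : ℝ, 0 < ε → ∃ N : ℕ, ∀ m n : ℕ, N ≤ m → N ≤ n → A (u m - u n) < ε) →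
      ∃ x : L, ∀ ε : ℝ, 0 < ε → ∃ N : ℕ, ∀ n : ℕ, N ≤ n → A (u n - x) < ε)
    -- the affine function ring R_v : a finitely generated Fq-algebra with fraction field K,
    -- all of whose nonzero elements have their only pole at v
    (R : Subring K)
    (hRfrac : ∀ x : K, ∃ p q : K, p ∈ R ∧ q ∈ R ∧ q ≠ 0 ∧ x * q = p)
    (hRint : ∀ x : K, x ∈ R → x ≠ 0 → 1 ≤ A (ι x))
    -- Γ is a finite-index subgroup of PGL₂(R_v) (lifted to GL₂)
    (G0 : Subgroup (GL (Fin 2) K))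
    (hG0 : ∀ g : GL (Fin 2) K, g ∈ G0 ↔
      ((∀ i j : Fin 2, (g : Matrix (Fin 2) (Fin 2) K) i j ∈ R) ∧
       (∀ i j : Fin 2, ((g⁻¹ : GL (Fin 2) K) : Matrix (Fin 2) (Fin 2) K) i j ∈ R)))
    (Γ : Subgroup (GL (Fin 2) K)) (hΓG0 : Γ ≤ G0)
    (hindex : (Γ.subgroupOf G0).index ≠ 0)
    -- α is a quadratic irrational over K in L, with Galois conjugate ασ
    (α ασ : L)
    (AA BB CC : K) (hAA : AA ≠ 0)
    (hαroot : ι AA * α ^ 2 + ι BB * α + ι CC = 0)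
    (hασroot : ι AA * ασ ^ 2 + ι BB * ασ + ι CC = 0)
    (hαirr : ∀ y : K, ι y ≠ α)
    (hne : ασ ≠ α) :
    ∃ mα : ℕ, ∀ m : ℕ, mα ≤ m →
      ((qv : ℝ) ^ (-(m : ℤ))) ∈ quadSpectrumG ι A (thetaPairsG ι Γ α ασ) := by
  have hq : (1 : ℝ) < qv := Nat.one_lt_cast.2 hqv
  obtain ⟨v, rfl⟩ := exists_absoluteValue_coe_eq (zero_le_one.trans hq.le) hA0 hAmul hAna hAval
  obtain ⟨T, -, hT⟩ := hAsurj 1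
  let : NontriviallyNormedField L :=
    { v.toNormedField with non_trivial := ⟨T, hq.trans_eq (hT.trans (zpow_one _)).symm⟩ }
  have : IsUltrametricDist L := .isUltrametricDist_of_forall_norm_add_le_max_norm hAna
  have : CompleteSpace L := completeSpace_of_forall_exists_norm_sub_lt hcomplete
  obtain ⟨ϖ, hϖ0, hϖ⟩ := hAsurj (-1)
  obtain ⟨s, -, hs⟩ := hres
  have : ProperSpace L :=
    properSpace_of_finite_residues hq hAval hϖ0 (hϖ.trans (zpow_neg_one _)) s.finite_toSet hs
  have hι : DenseRange ι := Metric.denseRange_iff.2 fun x ε hε ↦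
    (hdense x ε hε).imp fun y hy ↦ (dist_eq_norm _ _).trans_lt hy
  have := isFractionRing_of_forall_exists_mul_eq hRfrac
  obtain rfl : G0 = _ := Subgroup.ext fun g ↦ (hG0 g).trans mem_range_map_algebraMap_iff.symm
  obtain ⟨Γ, _, rfl⟩ := exists_finiteIndex_map_eq hΓG0 hindex
  obtain ⟨C, hC⟩ := hall_ray_in_quadratic_spectrum_general (R := R) hι
    (fun r hr ↦ hRint r r.2 (Subtype.coe_ne_coe.2 hr)) Γ hAA hαroot hασroot hαirr hne
  obtain ⟨mα, hmα⟩ := pow_unbounded_of_one_lt C hq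
  refine ⟨mα, fun m hm ↦ ?_⟩
  obtain ⟨t, -, ht⟩ := hAsurj m
  rw [zpow_neg, ← ht]
  exact hC t <| (hmα.trans_le (pow_le_pow_right₀ hq.le hm)).trans_eq
    (ht.trans (zpow_natCast _ m)).symm
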